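/- For every n ≥ 1, the Tamari lattice Tam_n contains exactly (1/(n+1))·binomial(2n,n) linear intervals of height 0, exactly binomial(2n−1, n−2) linear intervals of height 1, exactly 2·binomial(2n−k, n−k−1) linear intervals of height k for each 2 ≤ k < n, and none of height k ≥ n; in total, Tam_n contains (1/(n+1))·binomial(2n,n) + binomial(2n−1, n−2) + 2·binomial(2n−1, n+2) linear intervals. -/

import Mathlib

/-!
Common definitions.  A letter of a word is a `Bool`: `true` is an up step `u`,
`false` is a down step `d`.  Positions in words are 0-based.
-/

/-- A (possibly empty) Dyck word: as many `u`'s as `d`'s, and every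
prefix has at least as many `u`'s as `d`'s. -/
def IsDyckPath (w : List Bool) : Prop :=
  w.count true = w.count false ∧ ∀ p, p <+: w → p.count false ≤ p.count true

/-- A Dyck word of size `n`: `n` up steps, `n` down steps, every prefix has
at least as many `u`'s as `d`'s. -/
def IsDyckWord (n : ℕ) (w : List Bool) : Prop :=
  w.count true = n ∧ w.count false = n ∧ ∀ p, p <+: w → p.count false ≤ p.count true

/-- The set of Dyck words of size `n`. -/
def DyckSet (n : ℕ) : Set (List Bool) := {w | IsDyckWord n w}

/-- An increment function: a `{0,1}`-valued function (the paper's `δ : {1,…,n} → {0,1}`;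
only the values on `{1,…,n}` are ever used). -/
def IsIncFun (δ : ℕ → ℤ) : Prop := ∀ i, δ i = 0 ∨ δ i = 1

/-- The 0-based position in `w` of the `i`-th up step `u_i` (`i` is 1-based). -/
def upPos (w : List Bool) (i : ℕ) : ℕ :=
  ((List.range w.length).filter fun q => w.getD q false = true).getD (i - 1) 0

/-- `h_i(w)`: the (1-based, between 1 and 2n) position of the up step `u_i` in `w`. -/
def hpos (w : List Bool) (i : ℕ) : ℕ := upPos w i + 1

/-- The change of δ-altitude produced by the letter at position `q` of `w`:
the up step `u_i` contributes `δ i`, a down step contributes `-1`. -/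
def stepVal (δ : ℕ → ℤ) (w : List Bool) (q : ℕ) : ℤ :=
  if w.getD q false = true then δ ((w.take (q + 1)).count true) else -1

/-- The δ-elevation of the factor of `w` occupying positions `a, …, b-1`. -/
def elev (δ : ℕ → ℤ) (w : List Bool) (a b : ℕ) : ℤ :=
  ∑ q ∈ Finset.Ico a b, stepVal δ w q

/-- `C` is the δ-excursion of the up step of `w` at position `p`:
the smallest (nonempty) factor of `w` starting at `p` whose δ-elevation is `0`. -/
def IsDeltaExcAt (δ : ℕ → ℤ) (w : List Bool) (p : ℕ) (C : List Bool) : Prop :=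
  w.getD p false = true ∧
  ∃ m, 0 < m ∧ p + m ≤ w.length ∧ C = (w.drop p).take m ∧
    elev δ w p (p + m) = 0 ∧ ∀ m', 0 < m' → m' < m → elev δ w p (p + m') ≠ 0

/-- `C` is the excursion of the up step of `w` at position `p`: the smallest factor
of `w` starting at `p` that is itself a Dyck word. -/
def IsExcursionAt (w : List Bool) (p : ℕ) (C : List Bool) : Prop :=
  w.getD p false = true ∧
  ∃ m, 0 < m ∧ p + m ≤ w.length ∧ C = (w.drop p).take m ∧ IsDyckPath C ∧
    ∀ m', 0 < m' → m' < m → ¬ IsDyckPath ((w.drop p).take m')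

/-- `ℓ_i(w; δ)`: the length of the δ-excursion of `u_i` in `w`. -/
noncomputable def excLen (δ : ℕ → ℤ) (w : List Bool) (i : ℕ) : ℕ :=
  sInf {m | 0 < m ∧ elev δ w (upPos w i) (upPos w i + m) = 0}

/-- `Q` is the δ-rotation of `P` at some up step: `P = A d C B` with `d u_i` a valley
and `C` the δ-excursion of `u_i`, and `Q = A C d B`. -/
def DeltaRot (δ : ℕ → ℤ) (P Q : List Bool) : Prop :=
  ∃ A C B, P = A ++ false :: (C ++ B) ∧ Q = A ++ (C ++ false :: B) ∧
    IsDeltaExcAt δ P (A.length + 1) C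

/-- The alt-Tamari order `Tam^δ`: reflexive transitive closure of δ-rotations. -/
def altLE (δ : ℕ → ℤ) : List Bool → List Bool → Prop :=
  Relation.ReflTransGen (DeltaRot δ)

/-- The Tamari order: the alt-Tamari order for `δ ≡ 1` (the δ-excursion of any up step
is then its excursion). -/
def tamLE : List Bool → List Bool → Prop := altLE fun _ => 1

/-- The height (number of `u`'s minus number of `d`'s) of the length-`j` prefix of `w`. -/
def prefHeight (w : List Bool) (j : ℕ) : ℤ :=
  ((w.take j).count true : ℤ) - ((w.take j).count false : ℤ)

/-- The Dyck (inclusion) order: every prefix height of `P` is at most that of `Q`. -/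
def dyckLE (P Q : List Bool) : Prop := ∀ j, prefHeight P j ≤ prefHeight Q j

/-- Strict version of a relation `le`. -/
def ltOf (le : List Bool → List Bool → Prop) (P Q : List Bool) : Prop :=
  le P Q ∧ ¬ le Q P

/-- There is a strict chain `P = c 0 < c 1 < ⋯ < c k = Q` inside `S`. -/
def HasChainIn (S : Set (List Bool)) (le : List Bool → List Bool → Prop)
    (P Q : List Bool) (k : ℕ) : Prop :=
  ∃ c : ℕ → List Bool, c 0 = P ∧ c k = Q ∧ (∀ i ≤ k, c i ∈ S) ∧
    ∀ i < k, ltOf le (c i) (c (i + 1))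

/-- The interval `[P,Q]` of the poset `(S, le)` has height `k`: `k` is the maximal
length of a chain from `P` to `Q`. -/
def IntervalHeight (S : Set (List Bool)) (le : List Bool → List Bool → Prop)
    (P Q : List Bool) (k : ℕ) : Prop :=
  HasChainIn S le P Q k ∧ ∀ m, HasChainIn S le P Q m → m ≤ k

/-- The interval `[P,Q]` of the poset `(S, le)` is linear: it is totally ordered. -/
def LinearInterval (S : Set (List Bool)) (le : List Bool → List Bool → Prop)
    (P Q : List Bool) : Prop :=
  P ∈ S ∧ Q ∈ S ∧ le P Q ∧
  ∀ R R', R ∈ S → R' ∈ S → le P R → le R Q → le P R' → le R' Q → le R R' ∨ le R' R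

/-- `Q` covers `P` in the poset `(S, le)`. -/
def CovIn (S : Set (List Bool)) (le : List Bool → List Bool → Prop)
    (P Q : List Bool) : Prop :=
  P ∈ S ∧ Q ∈ S ∧ ltOf le P Q ∧ ∀ R ∈ S, ¬ (ltOf le P R ∧ ltOf le R Q)

/-- The number of valleys (factors `du`) of `w`. -/
def valleys (w : List Bool) : ℕ :=
  ((List.range w.length).filter fun q => !w.getD q true && w.getD (q + 1) false).length

section Intervals

variable {α : Type*} [PartialOrder α]

/-- The interval `[x, y]` of the subposet `S` is totally ordered. -/
def LinearOn (S : Set α) (x y : α) : Prop :=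
  x ∈ S ∧ y ∈ S ∧ x ≤ y ∧
    ∀ r ∈ S, ∀ r' ∈ S, x ≤ r → r ≤ y → x ≤ r' → r' ≤ y → r ≤ r' ∨ r' ≤ r

/-- There is a strict chain of length `k` from `x` to `y` inside `S`. -/
def ChainOn (S : Set α) (x y : α) (k : ℕ) : Prop :=
  ∃ c : ℕ → α, c 0 = x ∧ c k = y ∧ (∀ i ≤ k, c i ∈ S) ∧ ∀ i < k, c i < c (i + 1)

/-- The maximal length of a strict chain from `x` to `y` inside `S` is `k`. -/
def HeightOn (S : Set α) (x y : α) (k : ℕ) : Prop :=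
  ChainOn S x y k ∧ ∀ m, ChainOn S x y m → m ≤ k

theorem HeightOn.unique {S : Set α} {x y : α} {k l : ℕ} (hk : HeightOn S x y k)
    (hl : HeightOn S x y l) : k = l :=
  le_antisymm (hl.2 _ hk.1) (hk.2 _ hl.1)

theorem ChainOn.snoc {S : Set α} {x y z : α} {k : ℕ} (h : ChainOn S x y k) (hz : z ∈ S)
    (hyz : y < z) : ChainOn S x z (k + 1) := by
  obtain ⟨c, h0, hk, hS, hlt⟩ := h
  refine ⟨fun i => if i ≤ k then c i else z, by simpa using h0, by simp, ?_, ?_⟩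
  · intro i _
    dsimp only
    split_ifs with h
    exacts [hS i h, hz]
  · intro i hi
    rcases Nat.lt_succ_iff_lt_or_eq.mp hi with h | rfl
    · simpa [h.le, Nat.succ_le_of_lt h] using hlt i h
    · simpa [hk] using hyz

theorem ChainOn.add_le {S : Set α} {x y : α} {k : ℕ} (h : ChainOn S x y k) (μ : α → ℕ)
    (hμ : ∀ g ∈ S, ∀ g' ∈ S, x ≤ g → g' ≤ y → g < g' → μ g < μ g') : μ x + k ≤ μ y := by
  obtain ⟨c, rfl, rfl, hS, hlt⟩ := h
  have hmono : ∀ j ≤ k, ∀ i ≤ j, c i ≤ c j := by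
    intro j
    induction j with
    | zero => intro _ i hi; simp [Nat.le_zero.mp hi]
    | succ j ih =>
      intro hj i hi
      rcases Nat.le_succ_iff.mp hi with h | rfl
      · exact (ih (by omega) i h).trans (hlt j (by omega)).le
      · exact le_rfl
  have : ∀ j ≤ k, μ (c 0) + j ≤ μ (c j) := by
    intro j
    induction j with
    | zero => simp
    | succ j ih =>
      intro hj
      have h1 := ih (by omega)
      have h2 := hμ (c j) (hS _ (by omega)) (c (j + 1)) (hS _ hj) (hmono j (by omega) 0 (by omega))
        (hmono k le_rfl _ hj) (hlt j (by omega))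
      omega
  exact this k le_rfl

theorem heightOn_zero_iff {S : Set α} {x y : α} (hx : x ∈ S) : HeightOn S x y 0 ↔ x = y := by
  constructor
  · rintro ⟨⟨c, rfl, rfl, -⟩, -⟩
    rfl
  · rintro rfl
    refine ⟨⟨fun _ => x, rfl, rfl, fun _ _ => hx, by simp⟩, ?_⟩
    rintro m ⟨c, h0, hm, hS, hlt⟩
    by_contra hm0
    have h : ∀ j ≤ m, 0 < j → c 0 < c j := by
      intro j
      induction j with
      | zero => simp
      | succ j ih =>
        intro hj _
        rcases Nat.eq_zero_or_pos j with rfl | hpos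
        · exact hlt 0 (by omega)
        · exact (ih (by omega) hpos).trans (hlt j (by omega))
    have := h m le_rfl (by omega)
    rw [h0, hm] at this
    exact lt_irrefl _ this

variable {S : Set α} {σ : α → α}

theorem LinearOn.dual (hS : Set.MapsTo σ S S) (hσ : Set.LeftInvOn σ σ S)
    (hanti : AntitoneOn σ S) {x y : α} (h : LinearOn S x y) : LinearOn S (σ y) (σ x) := by
  obtain ⟨hx, hy, hxy, htot⟩ := h
  refine ⟨hS hy, hS hx, hanti hx hy hxy, fun r hr r' hr' h1 h2 h3 h4 => ?_⟩
  have key : ∀ r ∈ S, σ y ≤ r → r ≤ σ x → x ≤ σ r ∧ σ r ≤ y := fun r hr h1 h2 =>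
    ⟨hσ hx ▸ hanti hr (hS hx) h2, hσ hy ▸ hanti (hS hy) hr h1⟩
  obtain ⟨a1, a2⟩ := key r hr h1 h2
  obtain ⟨b1, b2⟩ := key r' hr' h3 h4
  rcases htot _ (hS hr) _ (hS hr') a1 a2 b1 b2 with h | h
  · right; simpa only [hσ hr, hσ hr'] using hanti (hS hr) (hS hr') h
  · left; simpa only [hσ hr, hσ hr'] using hanti (hS hr') (hS hr) h

theorem ChainOn.dual (hS : Set.MapsTo σ S S) (hσ : Set.LeftInvOn σ σ S)
    (hanti : AntitoneOn σ S) {x y : α} {k : ℕ} (h : ChainOn S x y k) :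
    ChainOn S (σ y) (σ x) k := by
  obtain ⟨c, rfl, rfl, hc, hlt⟩ := h
  refine ⟨fun i => σ (c (k - i)), by simp, by simp, fun i _ => hS (hc _ (by omega)), ?_⟩
  intro i hi
  have h1 := hlt (k - (i + 1)) (by omega)
  rw [show k - (i + 1) + 1 = k - i by omega] at h1
  have m1 := hc (k - (i + 1)) (by omega)
  have m2 := hc (k - i) (by omega)
  refine lt_of_le_of_ne (hanti m1 m2 h1.le) fun he => h1.ne ?_
  dsimp only at he
  rw [← hσ m1, ← hσ m2, he]

theorem HeightOn.dual (hS : Set.MapsTo σ S S) (hσ : Set.LeftInvOn σ σ S)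
    (hanti : AntitoneOn σ S) {x y : α} {k : ℕ} (hx : x ∈ S) (hy : y ∈ S)
    (h : HeightOn S x y k) : HeightOn S (σ y) (σ x) k :=
  ⟨h.1.dual hS hσ hanti, fun m hm => h.2 m <| by
    simpa only [hσ hx, hσ hy] using hm.dual hS hσ hanti⟩

end Intervals

section BracketVectors

/-- Bracket vectors: `e j` is the index of the first up step after the excursion of the
up step `j`.  Indices are 0-based, and beyond `n` the vector is normalized to `j ↦ j + 1`. -/
def bracketVectors (n : ℕ) : Set (ℕ → ℕ) :=
  {e | (∀ j, j < e j) ∧ (∀ j < n, e j ≤ n) ∧ (∀ j, n ≤ j → e j = j + 1) ∧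
    ∀ j i, j < i → i < e j → e i ≤ e j}

variable {n : ℕ} {e f : ℕ → ℕ}

/-- Raising the outermost excursions ending before `m` past the excursion of `m`. -/
theorem raise_mem (he : e ∈ bracketVectors n) {m : ℕ} (hm : m < n) {D : Finset ℕ}
    (hD : ∀ j ∈ D, e j = m) (hinit : ∀ j ∈ D, ∀ i < j, e i = m → i ∈ D) :
    (fun j => if j ∈ D then e m else e j) ∈ bracketVectors n := by
  obtain ⟨h1, h2, h3, h4⟩ := he
  refine ⟨fun j => ?_, fun j hj => ?_, fun j hj => ?_, fun j i hji hi => ?_⟩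
  · dsimp only
    split_ifs with h
    · have := h1 j; have := h1 m; have := hD j h; omega
    · exact h1 j
  · dsimp only
    split_ifs
    exacts [h2 m hm, h2 j hj]
  · have : j ∉ D := fun h => by have := hD j h; have := h1 j; omega
    simpa [this] using h3 j hj
  · dsimp only at hi ⊢
    by_cases hj : j ∈ D <;> by_cases hi' : i ∈ D <;> simp only [hj, hi', if_true, if_false] at hi ⊢
    · exact le_rfl
    · have hjm := hD j hj
      rcases lt_trichotomy i m with h | rfl | h
      · have := h4 j i hji (by omega); have := h1 m; omega
      · exact le_rfl
      · exact h4 m i h hi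
    · have him := hD i hi'
      have hle := h4 j i hji hi
      have hne : e j ≠ m := fun h => hj (hinit i hi' j hji h)
      have := h1 i
      exact h4 j m (by omega) (by omega)
    · exact h4 j i hji hi

/-- The pair `(e, f)` of bracket vectors describes two words `X dᵏ C B` and `X C dᵏ B` with `C` an
excursion. -/
def RightPair (n k : ℕ) (e f : ℕ → ℕ) : Prop :=
  e ∈ bracketVectors n ∧ f ∈ bracketVectors n ∧ ∃ m < n, ∃ D : Finset ℕ, D.card = k ∧
    (∀ j ∈ D, e j = m ∧ f j = e m) ∧ ∀ j ∉ D, f j = e j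

theorem RightPair.le {k : ℕ} (h : RightPair n k e f) : e ≤ f := by
  obtain ⟨he, -, m, -, D, -, hD, hD'⟩ := h
  intro j
  change e j ≤ f j
  by_cases hj : j ∈ D
  · have := hD j hj; have := he.1 m; omega
  · exact (hD' j hj).ge

theorem RightPair.lt_size {k : ℕ} (h : RightPair n k e f) : k < n := by
  obtain ⟨he, -, m, hm, D, rfl, hD, -⟩ := h
  have : D ⊆ Finset.range m := fun j hj => by
    have := he.1 j; have := (hD j hj).1; simp; omega
  have := Finset.card_le_card this
  simp at this
  omega

theorem mid_eq {m : ℕ} {D : Finset ℕ} (he : e ∈ bracketVectors n)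
    (hD : ∀ j ∈ D, e j = m ∧ f j = e m) (hD' : ∀ j ∉ D, f j = e j) {g : ℕ → ℕ}
    (hg : g ∈ bracketVectors n) (heg : e ≤ g) (hgf : g ≤ f) :
    (∀ j ∉ D, g j = e j) ∧ ∀ j ∈ D, g j = m ∨ g j = e m := by
  have h1 : ∀ j ∉ D, g j = e j := fun j hj =>
    le_antisymm ((hgf j).trans (hD' j hj).le) (heg j)
  refine ⟨h1, fun j hj => ?_⟩
  have hm : m ∉ D := fun h => by have := (hD m h).1; have := he.1 m; omega
  obtain ⟨a, b⟩ := hD j hj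
  have c : e j ≤ g j := heg j
  have d : g j ≤ f j := hgf j
  by_cases hjm : g j = m
  · exact Or.inl hjm
  · have := hg.2.2.2 j m (by have := he.1 j; omega) (by omega)
    rw [h1 m hm] at this
    omega

theorem RightPair.linearOn {k : ℕ} (h : RightPair n k e f) :
    LinearOn (bracketVectors n) e f := by
  have hle := h.le
  obtain ⟨he, hf, m, hm, D, hk, hD, hD'⟩ := h
  refine ⟨he, hf, hle, fun g hg g' hg' h1 h2 h3 h4 => ?_⟩
  obtain ⟨a, b⟩ := mid_eq he hD hD' hg h1 h2
  obtain ⟨a', b'⟩ := mid_eq he hD hD' hg' h3 h4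
  by_contra hcon
  simp only [not_or, Pi.le_def, not_forall, not_le] at hcon
  obtain ⟨⟨i, hi⟩, j, hj⟩ := hcon
  have hiD : i ∈ D := by by_contra h; rw [a i h, a' i h] at hi; omega
  have hjD : j ∈ D := by by_contra h; rw [a j h, a' j h] at hj; omega
  have := he.1 m
  have := b i hiD; have := b' i hiD; have := b j hjD; have := b' j hjD
  have := (hD i hiD).1; have := (hD j hjD).1; have := he.1 i; have := he.1 j
  rcases lt_trichotomy i j with h | rfl | h
  · have := hg'.2.2.2 i j h (by omega); omega
  · omega
  · have := hg.2.2.2 j i h (by omega); omega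

theorem RightPair.chainOn {k : ℕ} (h : RightPair n k e f) :
    ChainOn (bracketVectors n) e f k := by
  induction k generalizing f with
  | zero =>
    obtain ⟨he, hf, m, hm, D, hk, hD, hD'⟩ := h
    have : f = e := funext fun j => hD' j (by simp [Finset.card_eq_zero.mp hk])
    exact ⟨fun _ => e, rfl, this.symm, fun _ _ => he, by simp⟩
  | succ k ih =>
    obtain ⟨he, hf, m, hm, D, hk, hD, hD'⟩ := h
    have hne : D.Nonempty := Finset.card_pos.mp (by omega)
    obtain ⟨a, haD, hmax⟩ : ∃ a ∈ D, ∀ i ∈ D, i ≤ a :=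
      ⟨D.max' hne, D.max'_mem hne, fun i hi => D.le_max' i hi⟩
    obtain ⟨ea, fa⟩ := hD a haD
    have hmm := he.1 m
    have haa := he.1 a
    have hmem : Function.update f a m ∈ bracketVectors n := by
      obtain ⟨h1, h2, h3, h4⟩ := hf
      refine ⟨fun j => ?_, fun j hj => ?_, fun j hj => ?_, fun j i hji hi => ?_⟩
      · by_cases hj : j = a
        · subst hj; simp; omega
        · simpa [hj] using h1 j
      · by_cases hj : j = a
        · subst hj; simp; omega
        · simpa [hj] using h2 j ‹_›
      · have : j ≠ a := by omega
        simpa [this] using h3 j hj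
      · by_cases hja : j = a
        · subst hja
          have hia : i ≠ j := by omega
          have hiD : i ∉ D := fun h => by have := hmax i h; omega
          simp only [Function.update_self, Function.update_of_ne hia] at hi ⊢
          rw [hD' i hiD, ← ea]
          exact he.2.2.2 j i hji (by omega)
        · by_cases hia : i = a
          · subst hia
            simp only [Function.update_self, Function.update_of_ne hja] at hi ⊢
            have := h4 j i hji hi; omega
          · simp only [Function.update_of_ne hia, Function.update_of_ne hja] at hi ⊢
            exact h4 j i hji hi
    refine (ih ⟨he, hmem, m, hm, D.erase a, by rw [Finset.card_erase_of_mem haD]; omega,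
      fun j hj => ?_, fun j hj => ?_⟩).snoc hf ?_
    · rw [Finset.mem_erase] at hj
      rw [Function.update_of_ne hj.1]
      exact hD j hj.2
    · by_cases hja : j = a
      · subst hja; simp [ea]
      · rw [Function.update_of_ne hja]
        exact hD' j fun h => hj (Finset.mem_erase.mpr ⟨hja, h⟩)
    · rw [update_lt_self_iff]
      omega

theorem RightPair.heightOn {k : ℕ} (h : RightPair n k e f) :
    HeightOn (bracketVectors n) e f k := by
  refine ⟨h.chainOn, fun l hl => ?_⟩
  obtain ⟨he, hf, m, hm, D, hk, hD, hD'⟩ := h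
  have := hl.add_le (fun g => (D.filter fun j => g j = e m).card) ?_
  · have h2 := Finset.card_filter_le D (fun j => f j = e m)
    omega
  · intro g hg g' hg' h1 h2 h3
    obtain ⟨a, b⟩ := mid_eq he hD hD' hg h1 (h3.le.trans h2)
    obtain ⟨a', b'⟩ := mid_eq he hD hD' hg' (h1.trans h3.le) h2
    have hmm := he.1 m
    apply Finset.card_lt_card
    rw [Finset.ssubset_iff_of_subset]
    · obtain ⟨hle, j, hj⟩ := Pi.lt_def.mp h3
      have hjD : j ∈ D := by by_contra h; rw [a j h, a' j h] at hj; omega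
      have := b j hjD; have := b' j hjD
      exact ⟨j, by simp [hjD]; omega, by simp [hjD]; omega⟩
    · intro j
      simp only [Finset.mem_filter]
      rintro ⟨hj, hgj⟩
      have : g j ≤ g' j := h3.le j
      have := b' j hj
      exact ⟨hj, by omega⟩

/-- A nontrivial linear interval of bracket vectors either is a right pair, or changes a single
coordinate by more than one step. -/
theorem LinearOn.rightPair_or (h : LinearOn (bracketVectors n) e f) (hne : e ≠ f) :
    (∃ k, 1 ≤ k ∧ RightPair n k e f) ∨
      ∃ j, e (e j) < f j ∧ ∀ i, i ≠ j → f i = e i := by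
  obtain ⟨he, hf, hle', htot⟩ := h
  have hle : ∀ j, e j ≤ f j := hle'
  have hlt : ∀ j, e j ≠ f j → j < n ∧ e j < f j ∧ e j < n ∧ e (e j) ≤ f j := by
    intro j hj
    have hjn : j < n := by
      by_contra h
      exact hj ((he.2.2.1 j (by omega)).trans (hf.2.2.1 j (by omega)).symm)
    have h1 := hle j
    have h2 := hf.2.1 j hjn
    have h3 := hf.2.2.2 j (e j) (he.1 j) (by omega)
    have h4 := hle (e j)
    exact ⟨hjn, by omega, by omega, by omega⟩
  let D : Finset ℕ := (Finset.range n).filter fun j => e j ≠ f j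
  have hmemD : ∀ j, j ∈ D ↔ e j ≠ f j := fun j => by
    simp only [D, Finset.mem_filter, Finset.mem_range, and_iff_right_iff_imp]
    exact fun h => (hlt j h).1
  let R : ℕ → ℕ → ℕ := fun m j => if j ∈ D.filter (fun i => e i = m) then e m else e j
  have hR : ∀ m < n, R m ∈ bracketVectors n := fun m hm => by
    refine raise_mem he hm (fun j hj => (Finset.mem_filter.mp hj).2) fun j hj i hij hi => ?_
    rw [Finset.mem_filter, hmemD] at hj ⊢
    refine ⟨fun hei => ?_, hi⟩
    have h1 := hlt j hj.1
    have h2 := hf.2.2.2 i j hij (by have := he.1 j; omega)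
    omega
  have heR : ∀ m, e ≤ R m := fun m j => by
    change e j ≤ R m j
    simp only [R]
    split_ifs with h
    · have := (Finset.mem_filter.mp h).2; have := he.1 m; omega
    · exact le_rfl
  have hRf : ∀ m, R m ≤ f := fun m j => by
    change R m j ≤ f j
    simp only [R]
    split_ifs with h
    · rw [Finset.mem_filter, hmemD] at h
      rw [← h.2]; exact (hlt j h.1).2.2.2
    · exact hle j
  have hDne : D.Nonempty := by
    obtain ⟨j, hj⟩ := Function.ne_iff.mp hne
    exact ⟨j, (hmemD j).mpr hj⟩
  obtain ⟨a, haD, hmin⟩ : ∃ a ∈ D, ∀ i ∈ D, a ≤ i :=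
    ⟨D.min' hDne, D.min'_mem hDne, fun i hi => D.min'_le i hi⟩
  obtain ⟨han, haf, hmn, hmf⟩ := hlt a ((hmemD a).mp haD)
  obtain ⟨m, hm⟩ : ∃ m, e a = m := ⟨_, rfl⟩
  rw [hm] at haf hmn hmf
  have hmm := he.1 m
  have hRself : ∀ i ∈ D, R (e i) i = e (e i) := fun i hi => by simp [R, hi]
  have hRother : ∀ i l, e i ≠ l → R l i = e i := fun i l h => by simp [R, h]
  have hall : ∀ j ∈ D, e j = m := by
    intro j hj
    by_contra hjm
    obtain ⟨-, -, hjn, -⟩ := hlt j ((hmemD j).mp hj)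
    rcases htot _ (hR m hmn) _ (hR _ hjn) (heR _) (hRf _) (heR _) (hRf _) with h | h
    · have : R m a ≤ R (e j) a := h a
      rw [← hm, hRself a haD, hm, hRother a _ (by omega)] at this
      omega
    · have : R (e j) j ≤ R m j := h j
      rw [hRself j hj, hRother j _ hjm] at this
      have := he.1 (e j)
      omega
  have hnest : ∀ j ∈ D, f j ≤ f a := by
    intro j hj
    rcases (hmin j hj).eq_or_lt with h | h
    · rw [h]
    · have := he.1 j
      have := hall j hj
      exact hf.2.2.2 a j h (by omega)
  by_cases hfa : f a = e m
  · left
    refine ⟨D.card, Finset.card_pos.mpr hDne, he, hf, m, hmn, D, rfl, fun j hj => ⟨hall j hj, ?_⟩,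
      fun j hj => ?_⟩
    · have h1 := (hlt j ((hmemD j).mp hj)).2.2.2
      rw [hall j hj] at h1
      have := hnest j hj
      omega
    · by_contra h
      exact hj ((hmemD j).mpr fun h' => h h'.symm)
  · right
    refine ⟨a, by rw [hm]; omega, fun i hi => ?_⟩
    by_contra hfi
    have hiD : i ∈ D := (hmemD i).mpr fun h' => hfi h'.symm
    have hU : Function.update e a (f a) ∈ bracketVectors n := by
      obtain ⟨h1, h2, h3, h4⟩ := he
      refine ⟨fun j => ?_, fun j hj => ?_, fun j hj => ?_, fun j i hji hi => ?_⟩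
      · by_cases hj : j = a
        · have := h1 a; rw [hj, Function.update_self]; omega
        · simpa [hj] using h1 j
      · by_cases hj : j = a
        · rw [hj, Function.update_self]; exact hf.2.1 a han
        · simpa [hj] using h2 j ‹_›
      · have : j ≠ a := by omega
        simpa [this] using h3 j hj
      · by_cases hja : j = a
        · rw [hja] at hji hi ⊢
          have hia : i ≠ a := by omega
          simp only [Function.update_self, Function.update_of_ne hia] at hi ⊢
          exact (hle i).trans (hf.2.2.2 a i hji hi)
        · by_cases hia : i = a
          · rw [hia] at hji hi ⊢
            simp only [Function.update_self, Function.update_of_ne hja] at hi ⊢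
            have hjD : j ∉ D := fun h => by have := hmin j h; omega
            rw [hmemD, not_not] at hjD
            rw [hjD] at hi ⊢
            exact hf.2.2.2 j a hji hi
          · simp only [Function.update_of_ne hia, Function.update_of_ne hja] at hi ⊢
            exact h4 j i hji hi
    have hUf : Function.update e a (f a) ≤ f := by
      rw [update_le_iff]
      exact ⟨le_rfl, fun x _ => hle x⟩
    have heU : e ≤ Function.update e a (f a) := by
      rw [le_update_iff]
      exact ⟨hle a, fun x _ => le_rfl⟩
    rcases htot _ hU _ (hR m hmn) heU hUf (heR _) (hRf _) with h | h
    · have : Function.update e a (f a) a ≤ R m a := h a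
      rw [Function.update_self, ← hm, hRself a haD, hm] at this
      omega
    · have : R m i ≤ Function.update e a (f a) i := h i
      rw [Function.update_of_ne hi, ← hall i hiD, hRself i hiD, hall i hiD] at this
      omega

end BracketVectors

section Duality

variable {n : ℕ} {e f : ℕ → ℕ}

/-- The least index `i` such that all excursions starting in `[i, m)` end before `m`. -/
noncomputable def leftEnd (e : ℕ → ℕ) (m : ℕ) : ℕ :=
  sInf {i | ∀ l, i ≤ l → l < m → e l ≤ m}

theorem leftEnd_le_of {e : ℕ → ℕ} {m i : ℕ} (h : ∀ l, i ≤ l → l < m → e l ≤ m) :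
    leftEnd e m ≤ i :=
  Nat.sInf_le h

theorem leftEnd_le (e : ℕ → ℕ) (m : ℕ) : leftEnd e m ≤ m :=
  leftEnd_le_of fun _ h1 h2 => absurd h2 (not_lt.mpr h1)

theorem le_of_leftEnd_le {m l : ℕ} (h : leftEnd e m ≤ l) (hl : l < m) : e l ≤ m := by
  have : leftEnd e m ∈ {i | ∀ l, i ≤ l → l < m → e l ≤ m} :=
    Nat.sInf_mem ⟨m, fun _ h1 h2 => absurd h2 (not_lt.mpr h1)⟩
  exact this l h hl

theorem lt_of_lt_leftEnd {m i : ℕ} (h : i < leftEnd e m) : m < e (leftEnd e m - 1) := by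
  by_contra hcon
  have h1 := leftEnd_le e m
  have : leftEnd e m ≤ leftEnd e m - 1 := leftEnd_le_of fun l hl hlm => by
    rcases hl.eq_or_lt with rfl | h2
    · omega
    · exact le_of_leftEnd_le (by omega) hlm
  omega

theorem leftEnd_eq {m i : ℕ} (him : i ≤ m) (h : ∀ l, i ≤ l → l < m → e l ≤ m)
    (h' : 0 < i → m < e (i - 1)) : leftEnd e m = i := by
  refine le_antisymm (leftEnd_le_of h) ?_
  by_contra hlt
  have := le_of_leftEnd_le (e := e) (m := m) (l := i - 1) (by omega) (by omega)
  have := h' (by omega)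
  omega

theorem leftEnd_mono (h : e ≤ f) (m : ℕ) : leftEnd e m ≤ leftEnd f m :=
  leftEnd_le_of fun l h1 h2 => (h l).trans (le_of_leftEnd_le h1 h2)

theorem lt_leftEnd {j m l : ℕ} (h1 : j ≤ l) (h2 : l < m) (h3 : m < e l) : j < leftEnd e m := by
  by_contra h
  have := le_of_leftEnd_le (e := e) (m := m) (l := l) (by omega) h2
  omega

/-- The mirror image of a bracket vector. -/
noncomputable def dualVec (n : ℕ) (e : ℕ → ℕ) (i : ℕ) : ℕ :=
  if i < n then n - leftEnd e (n - 1 - i) else i + 1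

theorem dualVec_mem (n : ℕ) (e : ℕ → ℕ) : dualVec n e ∈ bracketVectors n := by
  refine ⟨fun j => ?_, fun j hj => ?_, fun j hj => ?_, fun j i hji hi => ?_⟩
  · unfold dualVec
    split_ifs
    · have := leftEnd_le e (n - 1 - j); omega
    · omega
  · simp [dualVec, hj]
  · simp [dualVec, hj]
  · by_cases hj : j < n
    · simp only [dualVec, hj, if_true] at hi ⊢
      have hin : i < n := by omega
      simp only [hin, if_true]
      by_contra hcon
      have hlt : leftEnd e (n - 1 - i) < leftEnd e (n - 1 - j) := by omega
      have h1 := lt_of_lt_leftEnd hlt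
      have := le_of_leftEnd_le (e := e) (m := n - 1 - i) (l := leftEnd e (n - 1 - j) - 1)
        (by omega) (by omega)
      omega
    · simp only [dualVec, hj, if_false] at hi
      omega

theorem dualVec_anti (n : ℕ) : Antitone (dualVec n) := by
  intro e f h j
  have := leftEnd_mono h (n - 1 - j)
  change dualVec n f j ≤ dualVec n e j
  unfold dualVec
  split_ifs <;> omega

theorem dualVec_dualVec (he : e ∈ bracketVectors n) : dualVec n (dualVec n e) = e := by
  obtain ⟨h1, h2, h3, h4⟩ := id he
  funext j
  by_cases hj : j < n
  · have key : leftEnd (dualVec n e) (n - 1 - j) = n - e j := by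
      have hj1 := h1 j
      have hj2 := h2 j hj
      refine leftEnd_eq (by omega) (fun l hl hlj => ?_) fun hpos => ?_
      · have : j < leftEnd e (n - 1 - l) :=
          lt_leftEnd le_rfl (by omega) (by omega)
        simp only [dualVec, show l < n by omega, if_true]
        omega
      · have : leftEnd e (e j) ≤ j := leftEnd_le_of fun l hl hlj => by
          rcases hl.eq_or_lt with rfl | h
          · exact le_rfl
          · exact h4 j l h hlj
        simp only [dualVec, show n - e j - 1 < n by omega, if_true]
        rw [show n - 1 - (n - e j - 1) = e j by omega]
        omega
    have := h2 j hj
    simp only [dualVec, hj, if_true] at key ⊢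
    rw [key]
    omega
  · simp only [dualVec, hj, if_false]
    exact (h3 j (by omega)).symm

theorem leftInvOn_dualVec (n : ℕ) :
    Set.LeftInvOn (dualVec n) (dualVec n) (bracketVectors n) :=
  fun _ he => dualVec_dualVec he

theorem mapsTo_dualVec (n : ℕ) : Set.MapsTo (dualVec n) (bracketVectors n) (bracketVectors n) :=
  fun e _ => dualVec_mem n e

theorem LinearOn.dualVec (h : LinearOn (bracketVectors n) e f) :
    LinearOn (bracketVectors n) (dualVec n f) (dualVec n e) :=
  h.dual (mapsTo_dualVec n) (leftInvOn_dualVec n) ((dualVec_anti n).antitoneOn _)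

theorem HeightOn.dualVec {k : ℕ} (he : e ∈ bracketVectors n) (hf : f ∈ bracketVectors n)
    (h : HeightOn (bracketVectors n) e f k) :
    HeightOn (bracketVectors n) (dualVec n f) (dualVec n e) k :=
  h.dual (mapsTo_dualVec n) (leftInvOn_dualVec n) ((dualVec_anti n).antitoneOn _) he hf

theorem LinearOn.of_dualVec (he : e ∈ bracketVectors n) (hf : f ∈ bracketVectors n)
    (h : LinearOn (bracketVectors n) (_root_.dualVec n f) (_root_.dualVec n e)) :
    LinearOn (bracketVectors n) e f := by
  simpa only [dualVec_dualVec he, dualVec_dualVec hf] using h.dualVec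

theorem HeightOn.of_dualVec {k : ℕ} (he : e ∈ bracketVectors n) (hf : f ∈ bracketVectors n)
    (h : HeightOn (bracketVectors n) (_root_.dualVec n f) (_root_.dualVec n e) k) :
    HeightOn (bracketVectors n) e f k := by
  simpa only [dualVec_dualVec he, dualVec_dualVec hf] using
    h.dualVec (dualVec_mem n f) (dualVec_mem n e)

/-- The dual of a right pair differs in a single coordinate. -/
theorem RightPair.dualVec_eq {k : ℕ} (h : RightPair n k e f) :
    ∃ a, ∀ i, i ≠ a → _root_.dualVec n f i = _root_.dualVec n e i := by
  have hle := h.le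
  obtain ⟨he, hf, m, hm, D, hk, hD, hD'⟩ := h
  refine ⟨n - 1 - m, fun i hi => ?_⟩
  by_cases hin : i < n
  · simp only [_root_.dualVec, hin, if_true]
    have hx : n - 1 - i ≠ m := by omega
    generalize n - 1 - i = x at hx
    congr 1
    refine le_antisymm (leftEnd_le_of fun l h1 h2 => ?_) (leftEnd_mono hle x)
    have h3 := le_of_leftEnd_le h1 h2
    by_cases hl : l ∈ D
    · obtain ⟨h4, h5⟩ := hD l hl
      rw [h5]
      exact le_of_leftEnd_le (by have := he.1 l; omega) (by omega)
    · rw [hD' l hl]; exact h3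
  · simp only [_root_.dualVec, hin, if_false]

/-- If a single coordinate changes by more than one step, then at least two coordinates of the
dual change. -/
theorem dualVec_ne_of_single (he : e ∈ bracketVectors n) (hf : f ∈ bracketVectors n) {j : ℕ}
    (hj : e (e j) < f j) :
    ∃ a b, a ≠ b ∧ dualVec n f a ≠ dualVec n e a ∧ dualVec n f b ≠ dualVec n e b := by
  have h1 := he.1 j
  have h2 := he.1 (e j)
  have hjn : j < n := by
    by_contra h
    have := hf.2.2.1 j (by omega)
    omega
  have h3 := hf.2.1 j hjn
  have key : ∀ x, j < x → x < f j → (∀ l, j ≤ l → l < x → e l ≤ x) →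
      dualVec n f (n - 1 - x) ≠ dualVec n e (n - 1 - x) := by
    intro x hjx hx hl
    have a1 : leftEnd e x ≤ j := leftEnd_le_of hl
    have a2 : j < leftEnd f x := lt_leftEnd le_rfl hjx hx
    have a3 := leftEnd_le f x
    simp only [dualVec, show n - 1 - x < n by omega, if_true,
      show n - 1 - (n - 1 - x) = x by omega]
    omega
  have below : ∀ l, j ≤ l → l < e j → e l ≤ e j := fun l hl hlj => by
    rcases hl.eq_or_lt with rfl | h
    · exact le_rfl
    · exact he.2.2.2 j l h hlj
  refine ⟨n - 1 - e j, n - 1 - e (e j), by omega, key _ h1 (by omega) below,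
    key _ (by omega) hj fun l hl hlj => ?_⟩
  rcases lt_trichotomy l (e j) with h | rfl | h
  · exact (below l hl h).trans h2.le
  · exact le_rfl
  · exact he.2.2.2 (e j) l h hlj

theorem LinearOn.exists_rightPair (h : LinearOn (bracketVectors n) e f) (hne : e ≠ f) :
    ∃ k, 1 ≤ k ∧ (RightPair n k e f ∨
      2 ≤ k ∧ RightPair n k (_root_.dualVec n f) (_root_.dualVec n e)) := by
  rcases h.rightPair_or hne with ⟨k, hk, h1⟩ | ⟨j, hj, -⟩
  · exact ⟨k, hk, Or.inl h1⟩
  · obtain ⟨a, b, hab, ha, hb⟩ := dualVec_ne_of_single h.1 h.2.1 hj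
    have hne' : _root_.dualVec n f ≠ _root_.dualVec n e := fun h => ha (congrFun h a)
    rcases h.dualVec.rightPair_or hne' with ⟨k, hk, h1⟩ | ⟨i, -, hi⟩
    · refine ⟨k, hk, Or.inr ⟨?_, h1⟩⟩
      obtain ⟨-, -, m, -, D, rfl, -, hD⟩ := h1
      have h2 : ({a, b} : Finset ℕ) ⊆ D := by
        intro x hx
        by_contra hxD
        rcases Finset.mem_insert.mp hx with rfl | hx
        · exact ha (hD _ hxD).symm
        · rw [Finset.mem_singleton] at hx
          subst hx
          exact hb (hD _ hxD).symm
      simpa [Finset.card_pair hab] using Finset.card_le_card h2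
    · exfalso
      by_cases hai : a = i
      · exact hb (hi b (by omega)).symm
      · exact ha (hi a hai).symm

theorem linear_height_one_iff :
    LinearOn (bracketVectors n) e f ∧ HeightOn (bracketVectors n) e f 1 ↔ RightPair n 1 e f := by
  refine ⟨fun ⟨hl, hh⟩ => ?_, fun h => ⟨h.linearOn, h.heightOn⟩⟩
  have hne : e ≠ f := fun h => by
    have := hh.unique ((heightOn_zero_iff hl.1).mpr h)
    omega
  obtain ⟨k, hk, h | ⟨hk2, h⟩⟩ := hl.exists_rightPair hne
  · rwa [hh.unique h.heightOn]
  · have := hh.unique (h.heightOn.of_dualVec hl.1 hl.2.1)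
    omega

theorem linear_height_iff {k : ℕ} (hk : 1 ≤ k) :
    LinearOn (bracketVectors n) e f ∧ HeightOn (bracketVectors n) e f k ↔
      RightPair n k e f ∨ e ∈ bracketVectors n ∧ f ∈ bracketVectors n ∧
        RightPair n k (dualVec n f) (dualVec n e) := by
  constructor
  · rintro ⟨hl, hh⟩
    have hne : e ≠ f := fun h => by
      have := hh.unique ((heightOn_zero_iff hl.1).mpr h)
      omega
    obtain ⟨l, -, h | ⟨-, h⟩⟩ := hl.exists_rightPair hne
    · rw [hh.unique h.heightOn]
      exact Or.inl h
    · rw [hh.unique (h.heightOn.of_dualVec hl.1 hl.2.1)]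
      exact Or.inr ⟨hl.1, hl.2.1, h⟩
  · rintro (h | ⟨he, hf, h⟩)
    · exact ⟨h.linearOn, h.heightOn⟩
    · exact ⟨h.linearOn.of_dualVec he hf, h.heightOn.of_dualVec he hf⟩

theorem RightPair.not_dualVec {k : ℕ} (hk : 2 ≤ k) (h : RightPair n k e f) :
    ¬ RightPair n k (_root_.dualVec n f) (_root_.dualVec n e) := by
  intro h'
  obtain ⟨a, ha⟩ := h'.dualVec_eq
  rw [dualVec_dualVec h.1, dualVec_dualVec h.2.1] at ha
  obtain ⟨he, hf, m, hm, D, rfl, hD, -⟩ := h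
  have : D ⊆ {a} := fun j hj => by
    rw [Finset.mem_singleton]
    by_contra hja
    have := ha j hja
    have := hD j hj
    have := he.1 m
    omega
  have := Finset.card_le_card this
  simp at this
  omega

/-- Every linear interval has a height, which is less than `n`. -/
theorem LinearOn.exists_height (hn : 1 ≤ n) (h : LinearOn (bracketVectors n) e f) :
    ∃ k < n, HeightOn (bracketVectors n) e f k := by
  by_cases hne : e = f
  · exact ⟨0, hn, (heightOn_zero_iff h.1).mpr hne⟩
  · obtain ⟨k, -, h1 | ⟨-, h1⟩⟩ := h.exists_rightPair hne
    · exact ⟨k, h1.lt_size, h1.heightOn⟩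
    · exact ⟨k, h1.lt_size, h1.heightOn.of_dualVec h.1 h.2.1⟩

end Duality

section AreaSequences

/-- `d m` counts the down steps before the `m`-th up step of a Dyck word of size `n`
(all down steps if `m = n`). -/
structure IsArea (n : ℕ) (d : ℕ → ℕ) : Prop where
  mono : Monotone d
  le : ∀ m < n, d m ≤ m
  last : d n = n

/-- The index of the first up step after the excursion of the up step `j`. -/
noncomputable def excEnd (n : ℕ) (d : ℕ → ℕ) (j : ℕ) : ℕ :=
  if j < n then sInf {m | j < m ∧ m + d j ≤ j + d m} else j + 1

variable {n : ℕ} {d d' : ℕ → ℕ}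

theorem excEnd_of_le {j : ℕ} (hj : n ≤ j) : excEnd n d j = j + 1 := by
  simp [excEnd, hj]

theorem excEnd_le_of {j m : ℕ} (hj : j < n) (hjm : j < m) (h : m + d j ≤ j + d m) :
    excEnd n d j ≤ m := by
  simp only [excEnd, hj, if_true]
  exact Nat.sInf_le ⟨hjm, h⟩

theorem lt_of_lt_excEnd {j m : ℕ} (hj : j < n) (hjm : j < m) (h : m < excEnd n d j) :
    j + d m < m + d j := by
  by_contra hcon
  have := excEnd_le_of (d := d) hj hjm (by omega)
  omega

theorem IsArea.excEnd_spec (hd : IsArea n d) {j : ℕ} (hj : j < n) :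
    j < excEnd n d j ∧ excEnd n d j ≤ n ∧ excEnd n d j + d j ≤ j + d (excEnd n d j) := by
  have hn : n ∈ {m | j < m ∧ m + d j ≤ j + d m} := by
    refine ⟨hj, ?_⟩
    have := hd.le j hj
    rw [hd.last]
    omega
  have h1 := Nat.sInf_mem ⟨n, hn⟩
  have h2 := Nat.sInf_le hn
  simp only [excEnd, hj, if_true]
  exact ⟨h1.1, h2, h1.2⟩

theorem IsArea.excEnd_eq (hd : IsArea n d) {j m : ℕ} (hj : j < n) (hjm : j < m)
    (h : m + d j ≤ j + d m) (h' : ∀ l, j < l → l < m → j + d l < l + d j) :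
    excEnd n d j = m := by
  refine le_antisymm (excEnd_le_of hj hjm h) ?_
  by_contra hcon
  obtain ⟨h1, -, h2⟩ := hd.excEnd_spec hj
  have := h' _ h1 (by omega)
  omega

theorem IsArea.excEnd_mem (hd : IsArea n d) : excEnd n d ∈ bracketVectors n := by
  refine ⟨fun j => ?_, fun j hj => (hd.excEnd_spec hj).2.1, fun j => excEnd_of_le,
    fun j i hji hi => ?_⟩
  · by_cases hj : j < n
    · exact (hd.excEnd_spec hj).1
    · rw [excEnd_of_le (by omega)]; omega
  · by_cases hj : j < n
    · obtain ⟨h1, h2, h3⟩ := hd.excEnd_spec hj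
      have := lt_of_lt_excEnd hj hji hi
      exact excEnd_le_of (by omega) hi (by omega)
    · rw [excEnd_of_le (by omega)] at hi; omega

/-- The height before an up step is the number of excursions that contain it. -/
theorem IsArea.card_excEnd (hd : IsArea n d) {m : ℕ} (hm : m ≤ n) :
    ((Finset.range m).filter fun j => m < excEnd n d j).card = m - d m := by
  rw [← Finset.card_range (m - d m)]
  refine Finset.card_bij (fun j _ => j - d j) ?_ ?_ ?_
  · intro j hj
    simp only [Finset.mem_filter, Finset.mem_range] at hj ⊢
    have := lt_of_lt_excEnd (by omega) hj.1 hj.2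
    have := hd.le j (by omega)
    omega
  · intro i hi j hj hij
    simp only [Finset.mem_filter, Finset.mem_range] at hi hj
    have h1 := hd.le i (by omega)
    have h2 := hd.le j (by omega)
    rcases lt_trichotomy i j with h | h | h
    · have := lt_of_lt_excEnd (n := n) (d := d) (by omega) h (by omega); omega
    · exact h
    · have := lt_of_lt_excEnd (n := n) (d := d) (by omega) h (by omega); omega
  · intro v hv
    rw [Finset.mem_range] at hv
    have h0 : d 0 = 0 := by
      rcases Nat.eq_zero_or_pos n with h | h
      · have := hd.last; rw [h] at this; exact this
      · have := hd.le 0 h; omega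
    let p : ℕ → Prop := fun j => j ≤ v + d j
    let j := Nat.findGreatest p (m - 1)
    have hp : p j := Nat.findGreatest_spec (P := p) (m := 0) (by omega) (by simp [p])
    have hjm : j ≤ m - 1 := Nat.findGreatest_le _
    have hgt : ∀ l, j < l → l ≤ m → v + d l < l := by
      intro l hl hlm
      rcases hlm.eq_or_lt with rfl | h
      · omega
      · have : ¬ p l := Nat.findGreatest_is_greatest hl (by omega)
        simp only [p] at this
        omega
    have h1 := hgt (j + 1) (by omega) (by omega)
    have h2 : d j ≤ d (j + 1) := hd.mono (by omega)
    simp only [p] at hp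
    refine ⟨j, ?_, by omega⟩
    simp only [Finset.mem_filter, Finset.mem_range]
    refine ⟨by omega, ?_⟩
    by_contra hcon
    obtain ⟨h3, h4, h5⟩ := hd.excEnd_spec (j := j) (by omega)
    have := hgt _ h3 (by omega)
    omega

theorem IsArea.eq_card (hd : IsArea n d) {m : ℕ} (hm : m ≤ n) :
    d m = ((Finset.range n).filter fun j => excEnd n d j ≤ m).card := by
  have h1 := hd.card_excEnd hm
  have h2 : ((Finset.range n).filter fun j => excEnd n d j ≤ m) =
      (Finset.range m).filter fun j => ¬ m < excEnd n d j := by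
    ext j
    have := hd.excEnd_mem.1 j
    simp only [Finset.mem_filter, Finset.mem_range]
    omega
  have h3 := Finset.card_filter_add_card_filter_not (s := Finset.range m)
    (fun j => m < excEnd n d j)
  rw [Finset.card_range] at h3
  have h4 : d m ≤ m := by
    rcases hm.eq_or_lt with rfl | h
    · exact hd.last.le
    · exact hd.le m h
  rw [h2]
  omega

/-- The number of excursions ending right before the up step `m`. -/
theorem IsArea.card_excEnd_eq (hd : IsArea n d) {m : ℕ} (hm0 : 0 < m) (hm : m ≤ n) :
    ((Finset.range n).filter fun j => excEnd n d j = m).card + d (m - 1) = d m := by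
  rw [hd.eq_card hm, hd.eq_card (m := m - 1) (by omega), ← Finset.card_union_of_disjoint]
  · congr 1
    ext j
    simp only [Finset.mem_filter, Finset.mem_range, Finset.mem_union]
    omega
  · rw [Finset.disjoint_left]
    intro j
    simp only [Finset.mem_filter, Finset.mem_range]
    omega

/-- The area sequence of a bracket vector. -/
def areaOf (n : ℕ) (e : ℕ → ℕ) (m : ℕ) : ℕ := ((Finset.range n).filter fun j => e j ≤ m).card

theorem isArea_areaOf {e : ℕ → ℕ} (he : e ∈ bracketVectors n) : IsArea n (areaOf n e) := by
  refine ⟨fun a b hab => Finset.card_le_card ?_, fun m hm => ?_, ?_⟩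
  · exact Finset.monotone_filter_right _ fun j _ (h : e j ≤ a) => h.trans hab
  · have : ((Finset.range n).filter fun j => e j ≤ m) ⊆ Finset.range m := fun j hj => by
      have := he.1 j
      simp only [Finset.mem_filter, Finset.mem_range] at hj ⊢
      omega
    simpa [areaOf] using Finset.card_le_card this
  · rw [areaOf, Finset.filter_true_of_mem fun j hj => he.2.1 j (Finset.mem_range.mp hj),
      Finset.card_range]

theorem excEnd_areaOf {e : ℕ → ℕ} (he : e ∈ bracketVectors n) : excEnd n (areaOf n e) = e := by
  funext j
  obtain ⟨h1, h2, h3, h4⟩ := id he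
  by_cases hj : j < n
  · refine (isArea_areaOf he).excEnd_eq hj (h1 j) ?_ fun m hjm hm => ?_
    · have hsub : ((Finset.range n).filter fun l => e l ≤ j) ∪ Finset.Ico j (e j) ⊆
          (Finset.range n).filter fun l => e l ≤ e j := fun l hl => by
        have := h1 j
        have := h2 j hj
        simp only [Finset.mem_union, Finset.mem_filter, Finset.mem_range, Finset.mem_Ico] at hl ⊢
        rcases hl with hl | ⟨hl, hl'⟩
        · omega
        · rcases hl.eq_or_lt with rfl | h
          · omega
          · exact ⟨by omega, h4 j l h hl'⟩
      have hdisj : Disjoint ((Finset.range n).filter fun l => e l ≤ j) (Finset.Ico j (e j)) := by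
        rw [Finset.disjoint_left]
        intro l
        have := h1 l
        simp only [Finset.mem_filter, Finset.mem_range, Finset.mem_Ico]
        omega
      have := Finset.card_le_card hsub
      rw [Finset.card_union_of_disjoint hdisj, Nat.card_Ico] at this
      have := h1 j
      simp only [areaOf]
      omega
    · have hsub : ((Finset.range n).filter fun l => e l ≤ m) ⊆
          ((Finset.range n).filter fun l => e l ≤ j) ∪ Finset.Ioo j m := fun l hl => by
        simp only [Finset.mem_union, Finset.mem_filter, Finset.mem_range, Finset.mem_Ioo] at hl ⊢
        by_contra hcon
        have hl1 := h1 l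
        rcases lt_trichotomy l j with h | rfl | h
        · have := h4 l j h (by omega); omega
        · omega
        · omega
      have := (Finset.card_le_card hsub).trans (Finset.card_union_le _ _)
      rw [Nat.card_Ioo] at this
      simp only [areaOf]
      omega
  · rw [excEnd_of_le (by omega), h3 j (by omega)]

/-- A rotation at the up step `m`, on the level of area sequences. -/
def RotArea (n m : ℕ) (d d' : ℕ → ℕ) : Prop :=
  ∀ l, d' l + (if m ≤ l ∧ l < excEnd n d m then 1 else 0) = d l

theorem RotArea.excEnd_le {m : ℕ} (hd : IsArea n d) (hd' : IsArea n d') (h : RotArea n m d d') :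
    excEnd n d ≤ excEnd n d' := by
  intro j
  change excEnd n d j ≤ excEnd n d' j
  by_cases hj : j < n
  · obtain ⟨h1, h2, h3⟩ := hd'.excEnd_spec hj
    have a := h j
    have b := h (excEnd n d' j)
    by_contra hcon
    have c := lt_of_lt_excEnd (d := d) hj h1 (by omega)
    have nest : m < j → j < excEnd n d m → excEnd n d j ≤ excEnd n d m := hd.excEnd_mem.2.2.2 m j
    rcases eq_or_ne m j with rfl | hmj
    · split_ifs at a b <;> omega
    · split_ifs at a b <;> omega
  · rw [excEnd_of_le (by omega), excEnd_of_le (by omega)]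

theorem height_le_of_forall_excEnd_le (hd : IsArea n d) {y : ℕ} (hy : y ≤ n) :
    ∀ l < y, (∀ i, l ≤ i → i < y → excEnd n d i ≤ y) → y + d l ≤ l + d y := by
  intro l
  induction hk : y - l using Nat.strong_induction_on generalizing l with
  | _ k ih =>
    intro hl h
    obtain ⟨h1, h2, h3⟩ := hd.excEnd_spec (j := l) (by omega)
    rcases (h l le_rfl hl).eq_or_lt with h4 | h4
    · rwa [h4] at h3
    · have := ih _ (by omega) _ rfl h4 fun i hi => h i (by omega)
      omega

theorem RotArea.excEnd_le_of_lt {m j : ℕ} {f : ℕ → ℕ} (hd : IsArea n d) (h : RotArea n m d d')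
    (hf : f ∈ bracketVectors n) (hle : excEnd n d ≤ f) (hj : excEnd n d j = m) (hjf : m < f j) :
    excEnd n d' ≤ f := by
  intro l
  change excEnd n d' l ≤ f l
  have hle' : ∀ i, excEnd n d i ≤ f i := hle
  by_cases hl : l < n
  · have hly := hf.1 l
    have hyn := hf.2.1 l hl
    refine excEnd_le_of hl hly ?_
    have key := height_le_of_forall_excEnd_le hd hyn l hly fun i hi hiy => by
      refine (hle' i).trans ?_
      rcases hi.eq_or_lt with rfl | hi
      · exact le_rfl
      · exact hf.2.2.2 l i hi hiy
    have a := h l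
    have b := h (f l)
    by_cases hcase : (m ≤ f l ∧ f l < excEnd n d m) ∧ l < m
    · obtain ⟨⟨h1, h2⟩, h3⟩ := hcase
      have hm := hle' m
      have hym : f l = m := by
        rcases h1.eq_or_lt with h4 | h4
        · exact h4.symm
        · have := hf.2.2.2 l m h3 h4; omega
      have hjl : j < l := by
        by_contra hcon
        rcases (not_lt.mp hcon).eq_or_lt with rfl | h5
        · omega
        · have := hf.2.2.2 l j h5 (by have := hd.excEnd_mem.1 j; omega)
          omega
      obtain ⟨-, -, h6⟩ := hd.excEnd_spec (j := j) (by omega)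
      have h7 := lt_of_lt_excEnd (d := d) (n := n) (j := j) (m := l) (by omega) hjl (by omega)
      rw [hj] at h6
      rw [hym] at b ⊢
      split_ifs at a b <;> omega
    · split_ifs at a b <;> omega
  · rw [excEnd_of_le (by omega), hf.2.2.1 l (by omega)]

end AreaSequences

section Words

/-- The number of down steps before the up step with (0-based) index `m`. -/
def dBefore : List Bool → ℕ → ℕ
  | [], _ => 0
  | false :: w, m => dBefore w m + 1
  | true :: _, 0 => 0
  | true :: w, m + 1 => dBefore w m

theorem dBefore_append_of_lt (A B : List Bool) {m : ℕ} (hm : m < A.count true) :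
    dBefore (A ++ B) m = dBefore A m := by
  induction A generalizing m with
  | nil => simp at hm
  | cons a A ih =>
    cases a
    · simp only [List.cons_append, dBefore]
      rw [ih (by simpa using hm)]
    · cases m with
      | zero => simp [dBefore]
      | succ m => simpa [dBefore] using ih (by simpa using hm)

theorem dBefore_append_of_le (A B : List Bool) {m : ℕ} (hm : A.count true ≤ m) :
    dBefore (A ++ B) m = A.count false + dBefore B (m - A.count true) := by
  induction A generalizing m with
  | nil => simp
  | cons a A ih =>
    cases a
    · simp only [List.cons_append, dBefore]
      rw [ih (by simpa using hm)]
      simp; omega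
    · cases m with
      | zero => simp at hm
      | succ m => simpa [dBefore] using ih (by simpa using hm)

theorem dBefore_of_count_le (w : List Bool) {m : ℕ} (hm : w.count true ≤ m) :
    dBefore w m = w.count false := by
  simpa [dBefore] using dBefore_append_of_le w [] hm

theorem dBefore_mono (w : List Bool) : Monotone (dBefore w) := by
  refine monotone_nat_of_le_succ fun m => ?_
  induction w generalizing m with
  | nil => simp [dBefore]
  | cons a w ih =>
    cases a
    · simpa [dBefore] using ih m
    · cases m with
      | zero => simp [dBefore]
      | succ m => simpa [dBefore] using ih m

theorem eq_of_dBefore_eq {w w' : List Bool} (hc : w.count true = w'.count true)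
    (h : ∀ m, dBefore w m = dBefore w' m) : w = w' := by
  induction w generalizing w' with
  | nil =>
    cases w' with
    | nil => rfl
    | cons b w' =>
      cases b
      · simpa [dBefore] using h 0
      · simp at hc
  | cons a w ih =>
    cases w' with
    | nil =>
      cases a
      · simpa [dBefore] using h 0
      · simp at hc
    | cons b w' =>
      cases a <;> cases b
      · rw [ih (by simpa using hc) fun m => by simpa [dBefore] using h m]
      · simpa [dBefore] using h 0
      · simpa [dBefore] using h 0
      · rw [ih (by simpa using hc) fun m => by simpa [dBefore] using h (m + 1)]

theorem exists_split_up {w : List Bool} {m : ℕ} (hm : m < w.count true) :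
    ∃ A Y, w = A ++ true :: Y ∧ A.count true = m ∧ A.count false = dBefore w m := by
  induction w generalizing m with
  | nil => simp at hm
  | cons a w ih =>
    cases a
    · obtain ⟨A, Y, h1, h2, h3⟩ := ih (m := m) (by simpa using hm)
      exact ⟨false :: A, Y, by simp [h1], by simpa using h2, by simp [dBefore, h3]⟩
    · cases m with
      | zero => exact ⟨[], w, by simp [dBefore]⟩
      | succ m =>
        obtain ⟨A, Y, h1, h2, h3⟩ := ih (m := m) (by simpa using hm)
        exact ⟨true :: A, Y, by simp [h1], by simpa using h2, by simp [dBefore, h3]⟩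

theorem exists_dBefore_eq {d : ℕ → ℕ} (hd : Monotone d) (N : ℕ) :
    ∃ w : List Bool, w.count true = N ∧ ∀ m ≤ N, dBefore w m = d m := by
  induction N with
  | zero =>
    refine ⟨List.replicate (d 0) false, by simp [List.count_replicate], fun m hm => ?_⟩
    rw [dBefore_of_count_le _ (by simp [List.count_replicate])]
    simp [Nat.le_zero.1 hm]
  | succ N ih =>
    obtain ⟨w, hw, h⟩ := ih
    have hf : w.count false = d N := by rw [← h N le_rfl, dBefore_of_count_le w hw.le]
    refine ⟨w ++ true :: List.replicate (d (N + 1) - d N) false, by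
      simp [List.count_replicate, hw], fun m hm => ?_⟩
    rcases lt_trichotomy m N with hlt | rfl | hlt
    · rw [dBefore_append_of_lt _ _ (by omega), h m hlt.le]
    · rw [dBefore_append_of_le _ _ (by omega), hw]
      simp [dBefore, hf]
    · obtain rfl : m = N + 1 := by omega
      have := hd (Nat.le_succ N)
      rw [dBefore_append_of_le _ _ (by omega), hw, hf]
      simp only [Nat.add_sub_cancel_left, dBefore]
      rw [dBefore_of_count_le _ (by simp [List.count_replicate])]
      simp only [List.count_replicate_self]
      simp only [Nat.succ_eq_add_one] at this
      omega

variable {n : ℕ} {w P Q : List Bool}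

theorem isDyckWord_iff : IsDyckWord n w ↔
    w.count true = n ∧ w.count false = n ∧ ∀ m < n, dBefore w m ≤ m := by
  refine and_congr_right fun h1 => and_congr_right fun h2 => ⟨fun h m hm => ?_, fun h p hp => ?_⟩
  · obtain ⟨A, Y, e1, e2, e3⟩ := exists_split_up (w := w) (m := m) (by omega)
    have := h A ⟨_, e1.symm⟩
    omega
  · obtain ⟨s, rfl⟩ := hp
    have h3 := dBefore_append_of_le p s (le_refl _)
    by_cases hlt : p.count true < n
    · have := h _ hlt
      omega
    · simp only [List.count_append] at h1 h2
      omega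

theorem IsDyckWord.isArea (hw : IsDyckWord n w) : IsArea n (dBefore w) := by
  obtain ⟨h1, h2, h3⟩ := isDyckWord_iff.1 hw
  exact ⟨dBefore_mono w, h3, by rw [dBefore_of_count_le w h1.le, h2]⟩

/-- The bracket vector of a word: the `j`-th entry is one more than the index of the last
up step in the excursion of the up step of index `j`. -/
noncomputable def bracketVector (n : ℕ) (w : List Bool) : ℕ → ℕ := excEnd n (dBefore w)

theorem bracketVector_bijOn (n : ℕ) :
    Set.BijOn (bracketVector n) (DyckSet n) (bracketVectors n) := by
  refine ⟨fun w hw => (IsDyckWord.isArea hw).excEnd_mem, fun w hw w' hw' h => ?_, fun e he => ?_⟩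
  · refine eq_of_dBefore_eq (hw.1.trans hw'.1.symm) fun m => ?_
    rcases le_total m n with hm | hm
    · rw [(IsDyckWord.isArea hw).eq_card hm, (IsDyckWord.isArea hw').eq_card hm]
      have h' : excEnd n (dBefore w) = excEnd n (dBefore w') := h
      rw [h']
    · rw [dBefore_of_count_le w (hw.1.le.trans hm), dBefore_of_count_le w' (hw'.1.le.trans hm),
        hw.2.1, hw'.2.1]
  · have ha := isArea_areaOf he
    obtain ⟨w, hw, h⟩ := exists_dBefore_eq ha.mono n
    have hcf : w.count false = n := by
      rw [← dBefore_of_count_le w hw.le, h n le_rfl, ha.last]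
    have hD : dBefore w = areaOf n e := by
      funext m
      rcases le_total m n with hm | hm
      · exact h m hm
      · rw [dBefore_of_count_le w (hw.le.trans hm), hcf]
        refine le_antisymm (ha.last.symm.le.trans (ha.mono hm)) ?_
        simpa [areaOf] using Finset.card_filter_le (Finset.range n) fun j => e j ≤ m
    refine ⟨w, isDyckWord_iff.2 ⟨hw, hcf, fun m hm => by rw [hD]; exact ha.le m hm⟩, ?_⟩
    rw [bracketVector, hD, excEnd_areaOf he]

theorem prefHeight_succ {j : ℕ} (hj : j < w.length) :
    prefHeight w (j + 1) = prefHeight w j + if w.getD j false = true then 1 else -1 := by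
  rw [prefHeight, prefHeight, List.take_add_one, List.getD_eq_getElem?_getD,
    List.getElem?_eq_getElem hj]
  cases w[j] <;> simp <;> ring

theorem elev_one {p m : ℕ} (h : p + m ≤ w.length) :
    elev (fun _ => 1) w p (p + m) = prefHeight (w.drop p) m := by
  induction m with
  | zero => simp [elev, prefHeight]
  | succ m ih =>
    have := ih (by omega)
    rw [elev] at this ⊢
    rw [← add_assoc, Finset.sum_Ico_succ_top (by omega), this,
      prefHeight_succ (by rw [List.length_drop]; omega)]
    simp [stepVal]

theorem prefHeight_pos {m : ℕ} (hm : m ≤ w.length) (h0 : w.getD 0 false = true)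
    (h : ∀ j, 0 < j → j < m → prefHeight w j ≠ 0) {j : ℕ} (hj : 0 < j) (hjm : j < m) :
    0 < prefHeight w j := by
  induction j with
  | zero => omega
  | succ j ih =>
    have hs := prefHeight_succ (w := w) (j := j) (by omega)
    rcases Nat.eq_zero_or_pos j with rfl | hj0
    · rw [h0] at hs
      simp [prefHeight] at hs ⊢
      omega
    · have h1 := ih hj0 (by omega)
      have h2 := h (j + 1) hj hjm
      split_ifs at hs <;> omega

theorem IsDeltaExcAt.rotArea {A B C : List Bool} (hP : IsDyckWord n (A ++ false :: (C ++ B)))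
    (h : IsDeltaExcAt (fun _ => 1) (A ++ false :: (C ++ B)) (A.length + 1) C) :
    IsDyckWord n (A ++ (C ++ false :: B)) ∧
      RotArea n (A.count true) (dBefore (A ++ false :: (C ++ B)))
        (dBefore (A ++ (C ++ false :: B))) := by
  obtain ⟨h0, L, hL, hLle, hC, hz, hnz⟩ := h
  set W := C ++ B with hW
  have hdrop : (A ++ false :: W).drop (A.length + 1) = W := by simp
  have hlen : L ≤ W.length := by simp at hLle; omega
  have h0' : W.getD 0 false = true := by
    rw [List.getD_eq_getElem?_getD, ← hdrop, List.getElem?_drop]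
    simpa [List.getD_eq_getElem?_getD] using h0
  rw [hdrop] at hC
  have hCL : C.length = L := by rw [hC, List.length_take]; omega
  rw [elev_one hLle, hdrop, prefHeight, ← hC] at hz
  have hpos : ∀ j, 0 < j → j < L → 0 < prefHeight W j := fun j =>
    prefHeight_pos hlen h0' fun j hj hjL => by
      have := hnz j hj hjL
      rwa [elev_one (by omega), hdrop] at this
  have hbal : C.count true = C.count false := by omega
  have hsub : C.count true + C.count false = L := by rw [← hCL, List.count_true_add_count_false]
  obtain ⟨C', rfl⟩ : ∃ C', C = true :: C' := by
    cases C with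
    | nil => simp at hCL; omega
    | cons a C => simp [hW] at h0'; exact ⟨C, by rw [h0']⟩
  set C := true :: C' with hCdef
  have hc1 : 0 < C.count true := by simp [hCdef]
  have hd := hP.isArea
  have hct := hP.1
  have hcf := hP.2.1
  simp only [hW, List.count_append, List.count_cons] at hct hcf
  simp at hct hcf
  have hPl : ∀ l, A.count true ≤ l → dBefore (A ++ false :: W) l =
      A.count false + (dBefore W (l - A.count true) + 1) := fun l hl => by
    rw [dBefore_append_of_le _ _ hl]; simp [dBefore]
  have hexc : excEnd n (dBefore (A ++ false :: W)) (A.count true) =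
      A.count true + C.count true := by
    refine hd.excEnd_eq (by omega) (by omega) ?_ fun l hl1 hl2 => ?_
    · rw [hPl _ le_rfl, hPl _ (by omega), hW, dBefore_append_of_lt _ _ (by omega),
        dBefore_append_of_le _ _ (by omega)]
      simp only [hCdef, Nat.sub_self, dBefore] at *
      omega
    · rw [hPl _ le_rfl, hPl _ (by omega), hW, dBefore_append_of_lt _ _ (by omega),
        dBefore_append_of_lt _ _ (by omega)]
      obtain ⟨X, Y, e1, e2, e3⟩ := exists_split_up (w := C) (m := l - A.count true) (by omega)
      have hXL : X.length < L := by rw [← hCL, e1]; simp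
      have hX0 : 0 < X.length := List.length_pos_of_mem
        (List.count_pos_iff.1 (show 0 < X.count true by omega))
      have := hpos X.length hX0 hXL
      rw [prefHeight, hW, e1, List.append_assoc, List.take_left] at this
      have h00 : dBefore C (A.count true - A.count true) = 0 := by
        rw [Nat.sub_self, hCdef]; rfl
      omega
  have hrot : RotArea n (A.count true) (dBefore (A ++ false :: W))
      (dBefore (A ++ (C ++ false :: B))) := by
    intro l
    rw [hexc]
    rcases lt_or_ge l (A.count true) with hl | hl
    · rw [dBefore_append_of_lt _ _ hl, dBefore_append_of_lt _ _ hl, if_neg (by omega)]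
      rfl
    · rw [hPl l hl, dBefore_append_of_le _ _ hl, hW]
      rcases lt_or_ge l (A.count true + C.count true) with hl' | hl'
      · rw [if_pos ⟨hl, hl'⟩, dBefore_append_of_lt _ _ (by omega),
          dBefore_append_of_lt _ _ (by omega)]
        omega
      · rw [if_neg (by omega), dBefore_append_of_le _ _ (by omega),
          dBefore_append_of_le _ _ (by omega)]
        simp only [dBefore]
        omega
  refine ⟨isDyckWord_iff.2 ⟨?_, ?_, fun m hm => ?_⟩, hrot⟩
  · simp; omega
  · simp; omega
  · have h1 := hrot m
    have h2 := hd.le m hm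
    omega

theorem exists_first_return (h0 : w.getD 0 false = true)
    (hw : w.count true ≤ w.count false) :
    ∃ L, 0 < L ∧ L ≤ w.length ∧ prefHeight w L = 0 ∧
      ∀ j, 0 < j → j < L → prefHeight w j ≠ 0 := by
  classical
  have hlen : 0 < w.length := by
    cases w with
    | nil => simp at h0
    | cons a w => simp
  have hex : ∃ L, 0 < L ∧ prefHeight w L ≤ 0 :=
    ⟨w.length, hlen, by rw [prefHeight, List.take_length]; omega⟩
  obtain ⟨hL0, hL⟩ := Nat.find_spec hex
  have hmin : ∀ j, 0 < j → j < Nat.find hex → 0 < prefHeight w j := fun j hj hjL => by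
    have := Nat.find_min hex hjL
    simp only [not_and, not_le] at this
    exact this hj
  have hle : Nat.find hex ≤ w.length :=
    Nat.find_min' hex ⟨hlen, by rw [prefHeight, List.take_length]; omega⟩
  refine ⟨Nat.find hex, hL0, hle, ?_, fun j hj hjL => (hmin j hj hjL).ne'⟩
  generalize Nat.find hex = L at *
  obtain ⟨j, rfl⟩ : ∃ j, L = j + 1 := ⟨L - 1, by omega⟩
  have hs := prefHeight_succ (w := w) (j := j) (by omega)
  rcases Nat.eq_zero_or_pos j with rfl | hj0
  · rw [h0] at hs
    have : prefHeight w 0 = 0 := by simp [prefHeight]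
    simp only [if_true] at hs
    omega
  · have := hmin j hj0 (by omega)
    split_ifs at hs <;> omega

theorem exists_deltaRot (hP : IsDyckWord n P) {m : ℕ} (hm0 : 0 < m) (hm : m < n)
    (h : dBefore P (m - 1) < dBefore P m) :
    ∃ Q, DeltaRot (fun _ => 1) P Q ∧ IsDyckWord n Q ∧ RotArea n m (dBefore P) (dBefore Q) := by
  obtain ⟨A', Y, rfl, hA1, hA2⟩ := exists_split_up (w := P) (m := m) (by rw [hP.1]; exact hm)
  rcases List.eq_nil_or_concat A' with rfl | ⟨A, a, rfl⟩
  · simp at hA1; omega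
  cases a
  · obtain ⟨L, hL0, hLle, hz, hnz⟩ := exists_first_return (w := true :: Y) rfl (by
      have h1 := hP.1
      have h2 := hP.2.1
      have h3 := hP.2.2 _ (List.prefix_append (A.concat false) (true :: Y))
      rw [List.count_append] at h1 h2
      omega)
    have hm' : A.count true = m := by simpa using hA1
    have hW : A.concat false ++ true :: Y =
        A ++ false :: ((true :: Y).take L ++ (true :: Y).drop L) := by
      rw [List.take_append_drop]; simp
    have hdrop : (A ++ false :: ((true :: Y).take L ++ (true :: Y).drop L)).drop (A.length + 1) =
        true :: Y := by
      rw [List.take_append_drop]; simp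
    rw [hW] at hP ⊢
    have hexc : IsDeltaExcAt (fun _ => 1) (A ++ false :: ((true :: Y).take L ++ (true :: Y).drop L))
        (A.length + 1) ((true :: Y).take L) := by
      have hlen : (A ++ false :: ((true :: Y).take L ++ (true :: Y).drop L)).length =
          A.length + 1 + (true :: Y).length := by
        rw [List.take_append_drop]; simp; omega
      refine ⟨?_, L, hL0, by omega, by rw [hdrop], ?_, fun j hj hjL => ?_⟩
      · rw [List.take_append_drop]; simp
      · rw [elev_one (by omega), hdrop, hz]
      · rw [elev_one (by omega), hdrop]
        exact hnz j hj hjL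
    obtain ⟨h1, h2⟩ := hexc.rotArea hP
    rw [hm'] at h2
    exact ⟨_, ⟨A, _, _, rfl, rfl, hexc⟩, h1, h2⟩
  · exfalso
    have h1 : A.count true + 1 = m := by simpa using hA1
    have h2 : A.count false = dBefore (A.concat true ++ true :: Y) m := by simpa using hA2
    rw [← h2] at h
    have h3 := dBefore_append_of_le A (true :: true :: Y) (m := m - 1) (by omega)
    simp at h h3
    omega

theorem tamLE_mem (h : tamLE P Q) (hP : P ∈ DyckSet n) : Q ∈ DyckSet n := by
  induction h with
  | refl => exact hP
  | tail _ h ih =>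
    obtain ⟨A, C, B, rfl, rfl, h⟩ := h
    exact (h.rotArea ih).1

theorem tamLE.bracketVector_le (h : tamLE P Q) (hP : P ∈ DyckSet n) :
    bracketVector n P ≤ bracketVector n Q := by
  induction h with
  | refl => exact le_rfl
  | tail h1 h ih =>
    have hR := tamLE_mem h1 hP
    obtain ⟨A, C, B, rfl, rfl, h⟩ := h
    obtain ⟨h2, h3⟩ := h.rotArea hR
    exact ih.trans (h3.excEnd_le (IsDyckWord.isArea hR) h2.isArea)

theorem tamLE_iff (hP : P ∈ DyckSet n) (hQ : Q ∈ DyckSet n) :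
    tamLE P Q ↔ bracketVector n P ≤ bracketVector n Q := by
  refine ⟨fun h => h.bracketVector_le hP, fun h => ?_⟩
  induction hs : ∑ m ∈ Finset.range n, dBefore P m using Nat.strong_induction_on
    generalizing P with
  | _ s ih =>
    by_cases heq : bracketVector n P = bracketVector n Q
    · rw [(bracketVector_bijOn n).injOn hP hQ heq]
      exact Relation.ReflTransGen.refl
    obtain ⟨j, hj⟩ := Function.ne_iff.1 heq
    have hd := IsDyckWord.isArea hP
    have hPm : bracketVector n P ∈ bracketVectors n := hd.excEnd_mem
    have hQm : bracketVector n Q ∈ bracketVectors n := (IsDyckWord.isArea hQ).excEnd_mem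
    have hjn : j < n := by
      by_contra hcon
      exact hj ((hPm.2.2.1 j (by omega)).trans (hQm.2.2.1 j (by omega)).symm)
    have hlt : bracketVector n P j < bracketVector n Q j := lt_of_le_of_ne (h j) hj
    have hQn := hQm.2.1 j hjn
    have hjP := hPm.1 j
    set m := bracketVector n P j with hm
    have hcard := hd.card_excEnd_eq (m := m) (by omega) (by omega)
    have hpos : 0 < ((Finset.range n).filter fun i => excEnd n (dBefore P) i = m).card :=
      Finset.card_pos.2 ⟨j, by simp only [Finset.mem_filter, Finset.mem_range]; exact ⟨hjn, hm.symm⟩⟩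
    obtain ⟨R, hR1, hR2, hR3⟩ := exists_deltaRot hP (m := m) (by omega) (by omega) (by omega)
    refine Relation.ReflTransGen.head hR1 (ih _ ?_ hR2 ?_ rfl)
    · rw [← hs]
      refine Finset.sum_lt_sum (fun l _ => ?_) ⟨m, Finset.mem_range.2 (by omega), ?_⟩
      · have := hR3 l
        omega
      · have h1 := hR3 m
        have h2 := (hd.excEnd_spec (j := m) (by omega)).1
        rw [if_pos ⟨le_rfl, h2⟩] at h1
        omega
    · exact hR3.excEnd_le_of_lt hd hQm h hm.symm hlt

end Words

section Counting

/-- `w` is a path from height `h` to height `0` that never goes below height `0`. -/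
def DescendsFrom : ℕ → List Bool → Prop
  | h, [] => h = 0
  | h, true :: w => DescendsFrom (h + 1) w
  | 0, false :: _ => False
  | h + 1, false :: w => DescendsFrom h w

theorem descendsFrom_iff {h : ℕ} {w : List Bool} : DescendsFrom h w ↔
    h + w.count true = w.count false ∧ ∀ p, p <+: w → p.count false ≤ h + p.count true := by
  induction w generalizing h with
  | nil => simp [DescendsFrom]
  | cons a w ih =>
    cases a
    · cases h with
      | zero =>
        simp only [DescendsFrom, false_iff, not_and, not_forall]
        exact fun _ => ⟨[false], by simp⟩
      | succ h =>
        simp only [DescendsFrom, ih]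
        refine and_congr (by simp; omega) ⟨fun H p hp => ?_, fun H p hp => ?_⟩
        · cases p with
          | nil => simp
          | cons b p =>
            obtain ⟨rfl, hp'⟩ := List.cons_prefix_cons.1 hp
            have := H p hp'
            simp; omega
        · have := H (false :: p) (List.cons_prefix_cons.2 ⟨rfl, hp⟩)
          simp at this; omega
    · simp only [DescendsFrom, ih]
      refine and_congr (by simp; omega) ⟨fun H p hp => ?_, fun H p hp => ?_⟩
      · cases p with
        | nil => simp
        | cons b p =>
          obtain ⟨rfl, hp'⟩ := List.cons_prefix_cons.1 hp
          have := H p hp'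
          simp; omega
      · have := H (true :: p) (List.cons_prefix_cons.2 ⟨rfl, hp⟩)
        simp at this; omega

theorem isDyckWord_iff_descendsFrom {n : ℕ} {w : List Bool} :
    IsDyckWord n w ↔ DescendsFrom 0 w ∧ w.length = 2 * n := by
  rw [descendsFrom_iff, ← List.count_true_add_count_false]
  simp only [IsDyckWord, zero_add]
  constructor
  · rintro ⟨h1, h2, h3⟩
    exact ⟨⟨by omega, h3⟩, by omega⟩
  · rintro ⟨⟨h1, h3⟩, h2⟩
    exact ⟨by omega, by omega, h3⟩

/-- The word read backwards, with up and down steps exchanged. -/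
def reverseWord (w : List Bool) : List Bool := (w.map not).reverse

theorem reverseWord_involutive : Function.Involutive reverseWord := fun w => by
  simp [reverseWord, List.map_reverse, Function.comp_def]

theorem descendsFrom_zero_append (X Z : List Bool) :
    DescendsFrom 0 (X ++ Z) ↔ ∃ a, DescendsFrom a (reverseWord X) ∧ DescendsFrom a Z := by
  induction X using List.reverseRecOn generalizing Z with
  | nil => simp [reverseWord, DescendsFrom]
  | append_singleton X x ih =>
    have hr : reverseWord (X ++ [x]) = (!x) :: reverseWord X := by simp [reverseWord]
    rw [List.append_assoc, List.singleton_append, ih, hr]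
    cases x
    · constructor
      · rintro ⟨_ | a, h1, h2⟩
        · exact h2.elim
        · exact ⟨a, h1, h2⟩
      · rintro ⟨a, h1, h2⟩
        exact ⟨a + 1, h1, h2⟩
    · constructor
      · rintro ⟨a, h1, h2⟩
        exact ⟨a + 1, h1, h2⟩
      · rintro ⟨_ | a, h1, h2⟩
        · exact h1.elim
        · exact ⟨a, h1, h2⟩

theorem descendsFrom_replicate_append (k a : ℕ) (w : List Bool) :
    DescendsFrom a (List.replicate k false ++ w) ↔ ∃ g, a = g + k ∧ DescendsFrom g w := by
  induction k generalizing a with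
  | zero => simp
  | succ k ih =>
    rw [List.replicate_succ, List.cons_append]
    cases a with
    | zero =>
      simp only [DescendsFrom, false_iff]
      rintro ⟨g, h, -⟩
      omega
    | succ a =>
      simp only [DescendsFrom, ih]
      exact exists_congr fun g => and_congr_left' (by omega)

/-- The paths of length `L` from height `h` to height `0` that never go below height `0`. -/
def descents : ℕ → ℕ → Finset (List Bool)
  | h, 0 => if h = 0 then {[]} else ∅
  | 0, L + 1 => (descents 1 L).image (List.cons true)
  | h + 1, L + 1 =>
    (descents (h + 2) L).image (List.cons true) ∪ (descents h L).image (List.cons false)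

theorem mem_descents {h L : ℕ} {w : List Bool} :
    w ∈ descents h L ↔ w.length = L ∧ DescendsFrom h w := by
  induction L generalizing h w with
  | zero =>
    rw [descents, List.length_eq_zero_iff]
    split_ifs with hh
    · subst hh
      simp only [Finset.mem_singleton]
      exact ⟨fun h => ⟨h, h ▸ rfl⟩, fun h => h.1⟩
    · simp only [Finset.notMem_empty, false_iff]
      rintro ⟨rfl, h⟩
      exact hh h
  | succ L ih =>
    cases h <;> rcases w with _ | ⟨_ | _, w⟩ <;> simp [descents, ih, DescendsFrom]

theorem card_descents_zero_succ (L : ℕ) : (descents 0 (L + 1)).card = (descents 1 L).card := by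
  rw [descents, Finset.card_image_of_injective _ (List.cons_injective)]

theorem card_descents_succ_succ (h L : ℕ) :
    (descents (h + 1) (L + 1)).card = (descents (h + 2) L).card + (descents h L).card := by
  rw [descents, Finset.card_union_of_disjoint, Finset.card_image_of_injective _ List.cons_injective,
    Finset.card_image_of_injective _ List.cons_injective]
  rw [Finset.disjoint_left]
  intro w hw hw'
  simp only [Finset.mem_image] at hw hw'
  obtain ⟨a, -, rfl⟩ := hw
  obtain ⟨b, -, h⟩ := hw'
  simp at h

theorem sum_antidiagonal_card_descents (a b L : ℕ) :
    ∑ ij ∈ Finset.HasAntidiagonal.antidiagonal L, (descents a ij.1).card * (descents b ij.2).card =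
      (descents (a + b + 1) (L + 1)).card := by
  induction L generalizing a with
  | zero =>
    rw [card_descents_succ_succ]
    cases a <;> cases b <;> simp [descents]
  | succ L ih =>
    rw [Finset.Nat.sum_antidiagonal_succ, card_descents_succ_succ]
    cases a with
    | zero =>
      simp only [card_descents_zero_succ, ih]
      simp [descents]
      rw [add_comm, add_comm 1 b]
    | succ a =>
      rw [show descents (a + 1) 0 = ∅ by simp [descents]]
      simp_rw [card_descents_succ_succ a, add_mul]
      rw [Finset.sum_add_distrib, ih, ih, show a + 2 + b + 1 = a + 1 + b + 2 by omega,
        show a + b + 1 = a + 1 + b by omega]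
      simp

theorem card_descents_add_choose (L r s : ℕ) (h : L + r = 2 * s) :
    (descents r L).card + L.choose (s + 1) = L.choose s := by
  induction L generalizing r s with
  | zero =>
    rcases Nat.eq_zero_or_pos s with rfl | hs
    · simp [descents, show r = 0 by omega]
    · obtain ⟨t, rfl⟩ : ∃ t, s = t + 1 := ⟨s - 1, by omega⟩
      simp [descents, show r ≠ 0 by omega]
  | succ L ih =>
    obtain ⟨t, rfl⟩ : ∃ t, s = t + 1 := ⟨s - 1, by omega⟩
    rw [Nat.choose_succ_succ L (t + 1), Nat.choose_succ_succ L t]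
    cases r with
    | zero =>
      rw [card_descents_zero_succ]
      have h1 := ih 1 (t + 1) (by omega)
      have h2 : L.choose t = L.choose (t + 1) := Nat.choose_symm_of_eq_add (by omega)
      simp only [Nat.succ_eq_add_one] at *
      omega
    | succ r =>
      rw [card_descents_succ_succ]
      have h1 := ih (r + 2) (t + 1) (by omega)
      have h2 := ih r t (by omega)
      simp only [Nat.succ_eq_add_one] at *
      omega

theorem sum_card_descents (L r s N : ℕ) (h : L + r = 2 * s) :
    ∑ g ∈ Finset.range N, (descents (r + 2 * g) L).card + L.choose (s + N) = L.choose s := by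
  induction N with
  | zero => simp
  | succ N ih =>
    have := card_descents_add_choose L (r + 2 * N) (s + N) (by omega)
    rw [Finset.sum_range_succ, ← ih, ← this]
    ring_nf

theorem ncard_dyckSet (n : ℕ) : (DyckSet n).ncard = (2 * n).choose n / (n + 1) := by
  have h : DyckSet n = descents 0 (2 * n) := by
    ext w
    rw [Finset.mem_coe, mem_descents, and_comm, ← isDyckWord_iff_descendsFrom]
    rfl
  rw [h, Set.ncard_coe_finset]
  have h1 := card_descents_add_choose (2 * n) 0 n (by omega)
  have h2 := Nat.choose_succ_right_eq (2 * n) n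
  rw [show 2 * n - n = n by omega] at h2
  symm
  apply Nat.div_eq_of_eq_mul_left (by omega)
  nlinarith

theorem ncard_marked_words {n k : ℕ} (hk : k < n) :
    {p : List Bool × List Bool |
      p.1 ++ (List.replicate k false ++ true :: p.2) ∈ DyckSet n}.ncard =
      (2 * n - k).choose (n + 1) := by
  let t : ℕ × ℕ × ℕ → Finset (List Bool × List Bool) := fun t =>
    descents (t.1 + k) t.2.1 ×ˢ descents (t.1 + 1) t.2.2
  let I := Finset.range (2 * n) ×ˢ Finset.HasAntidiagonal.antidiagonal (2 * n - k - 1)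
  have hset : {p : List Bool × List Bool |
      p.1 ++ (List.replicate k false ++ true :: p.2) ∈ DyckSet n} =
      ((I.biUnion t).image (Prod.map reverseWord id) : Finset _) := by
    ext ⟨X, Y⟩
    simp only [Set.mem_ofPred_eq, Finset.mem_coe, Finset.mem_image, Finset.mem_biUnion, I, t,
      Finset.mem_product, mem_descents, Finset.mem_range, Finset.HasAntidiagonal.mem_antidiagonal, DyckSet]
    rw [isDyckWord_iff_descendsFrom, descendsFrom_zero_append]
    simp only [descendsFrom_replicate_append, DescendsFrom]
    have hlen : ∀ w, (reverseWord w).length = w.length := fun w => by simp [reverseWord]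
    constructor
    · rintro ⟨⟨a, h1, g, rfl, h2⟩, h3⟩
      refine ⟨(reverseWord X, Y), ⟨(g, X.length, Y.length), ⟨?_, ?_⟩, ⟨hlen X, h1⟩, rfl, h2⟩, ?_⟩
      · have h4 := (descendsFrom_iff.1 h2).1
        have h5 := Y.count_true_add_count_false
        simp at h3 ⊢
        omega
      · simp at h3 ⊢
        omega
      · simp [reverseWord_involutive X]
    · rintro ⟨⟨R, Y'⟩, ⟨⟨g, i, j⟩, ⟨h1, h2⟩, ⟨h3, h4⟩, h5, h6⟩, h7⟩
      simp only [Prod.map_apply, id_eq, Prod.mk.injEq] at h7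
      obtain ⟨rfl, rfl⟩ := h7
      refine ⟨⟨g + k, ?_, g, rfl, h6⟩, ?_⟩
      · rwa [reverseWord_involutive R]
      · simp [hlen] at *
        omega
  rw [hset, Set.ncard_coe_finset, Finset.card_image_of_injective _
    (reverseWord_involutive.injective.prodMap Function.injective_id), Finset.card_biUnion]
  · simp only [t, Finset.card_product, I]
    rw [Finset.sum_product]
    simp only [sum_antidiagonal_card_descents]
    have h := sum_card_descents (2 * n - k) (k + 2) (n + 1) (2 * n) (by omega)
    rw [Nat.choose_eq_zero_of_lt (by omega : 2 * n - k < n + 1 + 2 * n)] at h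
    rw [← h, add_zero]
    refine Finset.sum_congr rfl fun g _ => ?_
    congr 2 <;> omega
  · rintro ⟨g, i, j⟩ - ⟨g', i', j'⟩ - hne
    rw [Function.onFun, Finset.disjoint_left]
    rintro ⟨R, Y⟩ h1 h2
    simp only [t, Finset.mem_product, mem_descents] at h1 h2
    have h3 := (descendsFrom_iff.1 h1.2.2).1
    have h4 := (descendsFrom_iff.1 h2.2.2).1
    apply hne
    simp only [Prod.mk.injEq]
    omega

end Counting

section Bijections

variable {n k m : ℕ}

theorem exists_eq_append_replicate {A : List Bool} (hA : A.count true = m) (hm : 0 < m)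
    (h : dBefore A (m - 1) + k ≤ A.count false) :
    ∃ X, A = X ++ List.replicate k false := by
  induction k generalizing A with
  | zero => exact ⟨A, by simp⟩
  | succ k ih =>
    rcases List.eq_nil_or_concat A with rfl | ⟨A, a, rfl⟩
    · simp at h
    rw [List.concat_eq_append] at *
    cases a
    · have hA' : A.count true = m := by simpa using hA
      rw [dBefore_append_of_lt _ _ (by omega)] at h
      obtain ⟨X, rfl⟩ := ih hA' (by simp at h; omega)
      exact ⟨X, by rw [List.append_assoc, List.replicate_succ']⟩
    · have hA' : A.count true + 1 = m := by simpa using hA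
      rw [dBefore_append_of_le _ _ (by omega)] at h
      simp at h
      omega

/-- Bracket vectors with a marked value that is taken at least `k` times. -/
def markedVectors (n k : ℕ) : Set ((ℕ → ℕ) × ℕ) :=
  {q | q.1 ∈ bracketVectors n ∧ q.2 < n ∧ k ≤ ((Finset.range n).filter fun j => q.1 j = q.2).card}

theorem ncard_markedVectors (hk : 1 ≤ k) (hkn : k < n) :
    (markedVectors n k).ncard = (2 * n - k).choose (n + 1) := by
  rw [← ncard_marked_words hkn]
  have hD : ∀ X Y : List Bool, dBefore (X ++ (List.replicate k false ++ true :: Y)) (X.count true) =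
      X.count false + k := fun X Y => by
    rw [← List.append_assoc, dBefore_append_of_le _ _ (by simp [List.count_replicate])]
    simp [List.count_replicate, dBefore]
  symm
  refine Set.ncard_congr (fun p _ =>
    (bracketVector n (p.1 ++ (List.replicate k false ++ true :: p.2)), p.1.count true)) ?_ ?_ ?_
  · rintro ⟨X, Y⟩ (hp : IsDyckWord n (X ++ (List.replicate k false ++ true :: Y)))
    have hd := hp.isArea
    have hXn : X.count true < n := by
      have := hp.1
      simp [List.count_replicate] at this
      omega
    have h1 := hd.le _ hXn
    rw [hD] at h1
    refine ⟨hd.excEnd_mem, hXn, ?_⟩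
    have h2 := hd.card_excEnd_eq (m := X.count true) (by omega) hXn.le
    rw [hD, dBefore_append_of_lt _ _ (by omega)] at h2
    have h3 := dBefore_mono X (Nat.sub_le (X.count true) 1)
    rw [dBefore_of_count_le X le_rfl] at h3
    change k ≤ ((Finset.range n).filter fun j =>
      excEnd n (dBefore (X ++ (List.replicate k false ++ true :: Y))) j = X.count true).card
    omega
  · rintro ⟨X, Y⟩ ⟨X', Y'⟩ hp hp' h
    simp only [Prod.mk.injEq] at h
    have hw := (bracketVector_bijOn n).injOn hp hp' h.1
    dsimp only at hw
    have h1 := hD X Y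
    rw [hw, h.2, hD X' Y'] at h1
    have hlen : X.length = X'.length := by
      rw [← X.count_true_add_count_false, ← X'.count_true_add_count_false]
      omega
    obtain ⟨rfl, h2⟩ := List.append_inj hw hlen
    simpa using h2
  · rintro ⟨e, m⟩ ⟨he, hm, hc⟩
    dsimp only at he hm hc
    obtain ⟨w, hw, rfl⟩ := (bracketVector_bijOn n).surjOn he
    have hw' : IsDyckWord n w := hw
    have hd := hw'.isArea
    obtain ⟨j, hj⟩ := Finset.card_pos.1 (lt_of_lt_of_le hk hc)
    have hm0 : 0 < m := by
      have h1 := he.1 j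
      rw [(Finset.mem_filter.1 hj).2] at h1
      omega
    have h2 := hd.card_excEnd_eq hm0 hm.le
    replace hc : k ≤ ((Finset.range n).filter fun j => excEnd n (dBefore w) j = m).card := hc
    obtain ⟨A, Y, rfl, hA1, hA2⟩ := exists_split_up (w := w) (m := m) (by rw [hw'.1]; exact hm)
    rw [dBefore_append_of_lt _ _ (by omega), ← hA2] at h2
    obtain ⟨X, rfl⟩ := exists_eq_append_replicate (k := k) hA1 hm0 (by omega)
    rw [List.append_assoc] at hw
    refine ⟨(X, Y), hw, ?_⟩
    simpa [List.count_replicate] using hA1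

theorem exists_initial_segment (S : Finset ℕ) (hk : k ≤ S.card) :
    ∃ D ⊆ S, D.card = k ∧ ∀ j ∈ D, ∀ i ∈ S, i < j → i ∈ D := by
  induction k with
  | zero => exact ⟨∅, by simp⟩
  | succ k ih =>
    obtain ⟨D, hDS, hc, hD⟩ := ih (by omega)
    have hne : (S \ D).Nonempty := by
      rw [← Finset.card_pos, Finset.card_sdiff_of_subset hDS]
      omega
    have hx := Finset.min'_mem _ hne
    rw [Finset.mem_sdiff] at hx
    refine ⟨insert ((S \ D).min' hne) D, Finset.insert_subset hx.1 hDS, by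
      rw [Finset.card_insert_of_notMem hx.2, hc], fun j hj i hi hij => ?_⟩
    rcases Finset.mem_insert.1 hj with rfl | hj
    · by_contra hcon
      rw [Finset.mem_insert, not_or] at hcon
      have := Finset.min'_le (S \ D) i (Finset.mem_sdiff.2 ⟨hi, hcon.2⟩)
      omega
    · exact Finset.mem_insert_of_mem (hD j hj i hi hij)

theorem initial_segment_unique {S D D' : Finset ℕ} (hS : D ⊆ S) (hS' : D' ⊆ S)
    (hc : D.card = D'.card) (hD : ∀ j ∈ D, ∀ i ∈ S, i < j → i ∈ D)
    (hD' : ∀ j ∈ D', ∀ i ∈ S, i < j → i ∈ D') : D = D' := by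
  by_cases h : D ⊆ D'
  · exact Finset.eq_of_subset_of_card_le h hc.ge
  · obtain ⟨x, hx, hx'⟩ := Finset.not_subset.1 h
    refine (Finset.eq_of_subset_of_card_le (fun y hy => ?_) hc.le).symm
    rcases lt_trichotomy y x with hlt | rfl | hlt
    · exact hD x hx y (hS' hy) hlt
    · exact hx
    · exact absurd (hD' y hy x (hS hx) hlt) hx'

theorem ncard_rightPair (hk : 1 ≤ k) :
    {p : (ℕ → ℕ) × (ℕ → ℕ) | RightPair n k p.1 p.2}.ncard = (2 * n - k).choose (n + 1) := by
  by_cases hkn : k < n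
  swap
  · have hempty : {p : (ℕ → ℕ) × (ℕ → ℕ) | RightPair n k p.1 p.2} = ∅ :=
      Set.eq_empty_of_forall_notMem fun p hp => hkn (RightPair.lt_size hp)
    rw [Nat.choose_eq_zero_of_lt (by omega), hempty, Set.ncard_empty]
  rw [← ncard_markedVectors hk hkn]
  have key : ∀ p : (ℕ → ℕ) × (ℕ → ℕ), RightPair n k p.1 p.2 → ∃ m < n, ∃ D : Finset ℕ,
      D ⊆ (Finset.range n).filter (fun j => p.1 j = m) ∧ D.card = k ∧
      (∀ j ∈ D, ∀ i ∈ (Finset.range n).filter (fun j => p.1 j = m), i < j → i ∈ D) ∧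
      (p.2 = fun j => if j ∈ D then p.1 m else p.1 j) := by
    rintro ⟨e, f⟩ ⟨he, hf, m, hm, D, hc, h1, h2⟩
    dsimp only at *
    have hlt : ∀ j ∈ D, j < m := fun j hj => by
      have := he.1 j
      rwa [(h1 j hj).1] at this
    refine ⟨m, hm, D, fun j hj => ?_, hc, fun j hj i hi hij => ?_, ?_⟩
    · exact Finset.mem_filter.2 ⟨Finset.mem_range.2 ((hlt j hj).trans hm), (h1 j hj).1⟩
    · by_contra hcon
      have h3 := h2 i hcon
      rw [(Finset.mem_filter.1 hi).2] at h3
      have h4 := hf.2.2.2 i j hij (by rw [h3]; exact hlt j hj)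
      rw [h3, (h1 j hj).2] at h4
      have := he.1 m
      omega
    · funext j
      split_ifs with hj
      · exact (h1 j hj).2
      · exact h2 j hj
  choose! M hM D hDS hDc hDi hf using key
  refine Set.ncard_congr (fun p _ => (p.1, M p)) ?_ ?_ ?_
  · rintro p hp
    exact ⟨hp.1, hM p hp, (hDc p hp).symm.le.trans (Finset.card_le_card (hDS p hp))⟩
  · rintro p q hp hq h
    rw [Prod.mk.injEq] at h
    have h1 := hDS p hp
    have h2 := hDi p hp
    rw [h.1, h.2] at h1 h2
    have h3 := initial_segment_unique h1 (hDS q hq) ((hDc p hp).trans (hDc q hq).symm) h2 (hDi q hq)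
    refine Prod.ext h.1 ?_
    rw [hf p hp, hf q hq, h.1, h.2, h3]
  · rintro ⟨e, m⟩ ⟨he, hm, hc⟩
    dsimp only at he hm hc
    obtain ⟨D', h1, h2, h3⟩ := exists_initial_segment _ hc
    have hval : ∀ j ∈ D', e j = m := fun j hj => (Finset.mem_filter.1 (h1 hj)).2
    have hmem := raise_mem he hm hval fun j hj i hij hi => by
      refine h3 j hj i (Finset.mem_filter.2 ⟨Finset.mem_range.2 ?_, hi⟩) hij
      have := Finset.mem_range.1 (Finset.mem_filter.1 (h1 hj)).1
      omega
    obtain ⟨f, hf'⟩ : ∃ f : ℕ → ℕ, f = fun j => if j ∈ D' then e m else e j := ⟨_, rfl⟩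
    rw [← hf'] at hmem
    have hfD : ∀ j ∈ D', f j = e m := fun j hj => by rw [hf']; exact if_pos hj
    have hp : RightPair n k e f :=
      ⟨he, hmem, m, hm, D', h2, fun j hj => ⟨hval j hj, hfD j hj⟩,
        fun j hj => by rw [hf']; exact if_neg hj⟩
    refine ⟨(e, f), hp, Prod.ext rfl ?_⟩
    obtain ⟨j, hj⟩ := Finset.card_pos.1 (show 0 < D'.card by omega)
    have h4 : f j = if j ∈ D (e, f) then e (M (e, f)) else e j := congrFun (hf (e, f) hp) j
    rw [hfD j hj] at h4
    by_cases hj' : j ∈ D (e, f)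
    · exact (Finset.mem_filter.1 (hDS (e, f) hp hj')).2.symm.trans (hval j hj)
    · rw [if_neg hj', hval j hj] at h4
      have := he.1 m
      omega

end Bijections

section Transfer

variable {n k : ℕ} {P Q : List Bool}

theorem linearInterval_iff : LinearInterval (DyckSet n) tamLE P Q ↔
    P ∈ DyckSet n ∧ Q ∈ DyckSet n ∧
      LinearOn (bracketVectors n) (bracketVector n P) (bracketVector n Q) := by
  have hb := bracketVector_bijOn n
  refine and_congr_right fun hP => and_congr_right fun hQ => ⟨fun ⟨h1, h2⟩ => ?_, fun h => ?_⟩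
  · refine ⟨hb.mapsTo hP, hb.mapsTo hQ, (tamLE_iff hP hQ).1 h1, ?_⟩
    intro r hr r' hr'
    obtain ⟨R, hR, rfl⟩ := hb.surjOn hr
    obtain ⟨R', hR', rfl⟩ := hb.surjOn hr'
    rw [← tamLE_iff hP hR, ← tamLE_iff hR hQ, ← tamLE_iff hP hR', ← tamLE_iff hR' hQ,
      ← tamLE_iff hR hR', ← tamLE_iff hR' hR]
    exact h2 R R' hR hR'
  · refine ⟨(tamLE_iff hP hQ).2 h.2.2.1, fun R R' hR hR' => ?_⟩
    rw [tamLE_iff hP hR, tamLE_iff hR hQ, tamLE_iff hP hR', tamLE_iff hR' hQ,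
      tamLE_iff hR hR', tamLE_iff hR' hR]
    exact h.2.2.2 _ (hb.mapsTo hR) _ (hb.mapsTo hR')

theorem ltOf_tamLE_iff (hP : P ∈ DyckSet n) (hQ : Q ∈ DyckSet n) :
    ltOf tamLE P Q ↔ bracketVector n P < bracketVector n Q := by
  rw [ltOf, tamLE_iff hP hQ, tamLE_iff hQ hP, lt_iff_le_not_ge]

theorem hasChainIn_iff (hP : P ∈ DyckSet n) (hQ : Q ∈ DyckSet n) :
    HasChainIn (DyckSet n) tamLE P Q k ↔
      ChainOn (bracketVectors n) (bracketVector n P) (bracketVector n Q) k := by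
  have hb := bracketVector_bijOn n
  constructor
  · rintro ⟨c, rfl, rfl, hc, hlt⟩
    exact ⟨fun i => bracketVector n (c i), rfl, rfl, fun i hi => hb.mapsTo (hc i hi),
      fun i hi => (ltOf_tamLE_iff (hc i hi.le) (hc (i + 1) hi)).1 (hlt i hi)⟩
  · rintro ⟨c, h0, hk, hc, hlt⟩
    have hinv := hb.invOn_invFunOn
    have hmem : ∀ i ≤ k, Function.invFunOn (bracketVector n) (DyckSet n) (c i) ∈ DyckSet n :=
      fun i hi => hb.surjOn.mapsTo_invFunOn (hc i hi)
    refine ⟨fun i => Function.invFunOn (bracketVector n) (DyckSet n) (c i), ?_, ?_, hmem,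
      fun i hi => ?_⟩
    · dsimp only
      rw [h0, hinv.1 hP]
    · dsimp only
      rw [hk, hinv.1 hQ]
    · rw [ltOf_tamLE_iff (hmem i hi.le) (hmem (i + 1) hi), hinv.2 (hc i hi.le),
        hinv.2 (hc (i + 1) hi)]
      exact hlt i hi

theorem intervalHeight_iff (hP : P ∈ DyckSet n) (hQ : Q ∈ DyckSet n) :
    IntervalHeight (DyckSet n) tamLE P Q k ↔
      HeightOn (bracketVectors n) (bracketVector n P) (bracketVector n Q) k := by
  simp only [IntervalHeight, HeightOn, hasChainIn_iff hP hQ]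

theorem ncard_words_eq_ncard_vectors {R : (ℕ → ℕ) × (ℕ → ℕ) → Prop}
    (hR : ∀ p, R p → p.1 ∈ bracketVectors n ∧ p.2 ∈ bracketVectors n) :
    {pq : List Bool × List Bool | pq.1 ∈ DyckSet n ∧ pq.2 ∈ DyckSet n ∧
      R (bracketVector n pq.1, bracketVector n pq.2)}.ncard = {p | R p}.ncard := by
  have hb := bracketVector_bijOn n
  refine Set.ncard_congr (fun pq _ => (bracketVector n pq.1, bracketVector n pq.2))
    (fun pq h => h.2.2) (fun pq pq' h h' heq => ?_) fun p hp => ?_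
  · rw [Prod.mk.injEq] at heq
    exact Prod.ext (hb.injOn h.1 h'.1 heq.1) (hb.injOn h.2.1 h'.2.1 heq.2)
  · obtain ⟨P, hP, h1⟩ := hb.surjOn (hR p hp).1
    obtain ⟨Q, hQ, h2⟩ := hb.surjOn (hR p hp).2
    have heq : (bracketVector n P, bracketVector n Q) = p := Prod.ext h1 h2
    exact ⟨(P, Q), ⟨hP, hQ, heq ▸ hp⟩, heq⟩

/-- The linear intervals of height `k` among the bracket vectors of size `n`. -/
def linearPairs (n k : ℕ) : Set ((ℕ → ℕ) × (ℕ → ℕ)) :=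
  {p | LinearOn (bracketVectors n) p.1 p.2 ∧ HeightOn (bracketVectors n) p.1 p.2 k}

theorem ncard_linearInterval_height (n k : ℕ) :
    {pq : List Bool × List Bool | LinearInterval (DyckSet n) tamLE pq.1 pq.2 ∧
      IntervalHeight (DyckSet n) tamLE pq.1 pq.2 k}.ncard = (linearPairs n k).ncard := by
  rw [linearPairs, ← ncard_words_eq_ncard_vectors fun p hp => ⟨hp.1.1, hp.1.2.1⟩]
  congr 1
  ext ⟨P, Q⟩
  simp only [Set.mem_ofPred_eq, linearInterval_iff, and_assoc]
  exact and_congr_right fun hP => and_congr_right fun hQ => and_congr_right fun _ =>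
    intervalHeight_iff hP hQ

theorem finite_bracketVectors (n : ℕ) : (bracketVectors n).Finite := by
  rw [← (bracketVector_bijOn n).image_eq]
  refine Set.Finite.image _ ((List.finite_length_eq Bool (2 * n)).subset fun w hw => ?_)
  exact (isDyckWord_iff_descendsFrom.1 hw).2

theorem ncard_linearPairs_zero (n : ℕ) :
    (linearPairs n 0).ncard = (2 * n).choose n / (n + 1) := by
  have h : linearPairs n 0 = (fun w => (bracketVector n w, bracketVector n w)) '' DyckSet n := by
    ext ⟨e, f⟩
    constructor
    · rintro ⟨h1, h2⟩
      obtain ⟨w, hw, rfl⟩ := (bracketVector_bijOn n).surjOn h1.1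
      exact ⟨w, hw, Prod.ext rfl ((heightOn_zero_iff h1.1).1 h2)⟩
    · rintro ⟨w, hw, heq⟩
      obtain ⟨rfl, rfl⟩ := Prod.mk.inj heq
      have hm := (bracketVector_bijOn n).mapsTo hw
      exact ⟨⟨hm, hm, le_rfl, fun r _ r' _ _ h2 h3 _ => Or.inl (h2.trans h3)⟩,
        (heightOn_zero_iff hm).2 rfl⟩
  rw [h, Set.InjOn.ncard_image, ncard_dyckSet]
  exact fun w hw w' hw' heq => (bracketVector_bijOn n).injOn hw hw' (Prod.mk.inj heq).1

theorem ncard_linearPairs_one (n : ℕ) : (linearPairs n 1).ncard = (2 * n - 1).choose (n + 1) := by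
  rw [← ncard_rightPair le_rfl]
  simp only [linearPairs, linear_height_one_iff]

theorem ncard_linearPairs (hk : 2 ≤ k) :
    (linearPairs n k).ncard = 2 * (2 * n - k).choose (n + 1) := by
  have hk1 : 1 ≤ k := by omega
  have hunion : linearPairs n k = {p | RightPair n k p.1 p.2} ∪
      (fun p : (ℕ → ℕ) × (ℕ → ℕ) => (dualVec n p.2, dualVec n p.1)) ''
        {p | RightPair n k p.1 p.2} := by
    ext ⟨e, f⟩
    simp only [linearPairs, Set.mem_ofPred_eq, linear_height_iff hk1, Set.mem_union, Set.mem_image]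
    refine or_congr_right ⟨fun ⟨he, hf, h⟩ => ?_, ?_⟩
    · exact ⟨(dualVec n f, dualVec n e), h, Prod.ext (dualVec_dualVec he) (dualVec_dualVec hf)⟩
    · rintro ⟨⟨e', f'⟩, h, heq⟩
      obtain ⟨rfl, rfl⟩ := Prod.mk.inj heq
      refine ⟨dualVec_mem n _, dualVec_mem n _, ?_⟩
      rwa [dualVec_dualVec h.1, dualVec_dualVec h.2.1]
  have hfin : {p : (ℕ → ℕ) × (ℕ → ℕ) | RightPair n k p.1 p.2}.Finite :=
    ((finite_bracketVectors n).prod (finite_bracketVectors n)).subset fun p hp => ⟨hp.1, hp.2.1⟩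
  rw [hunion, Set.ncard_union_eq _ hfin (hfin.image _), Set.InjOn.ncard_image,
    ncard_rightPair hk1, ← two_mul]
  · intro p hp q hq heq
    obtain ⟨h1, h2⟩ := Prod.mk.inj heq
    exact Prod.ext ((leftInvOn_dualVec n).injOn hp.1 hq.1 h2)
      ((leftInvOn_dualVec n).injOn hp.2.1 hq.2.1 h1)
  · rw [Set.disjoint_left]
    rintro _ hp ⟨⟨e, f⟩, hq, rfl⟩
    refine RightPair.not_dualVec hk hp ?_
    dsimp only
    rwa [dualVec_dualVec hq.1, dualVec_dualVec hq.2.1]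

theorem ncard_linearOn (hn : 1 ≤ n) :
    {p : (ℕ → ℕ) × (ℕ → ℕ) | LinearOn (bracketVectors n) p.1 p.2}.ncard =
      ∑ k ∈ Finset.range n, (linearPairs n k).ncard := by
  classical
  have hfin : {p : (ℕ → ℕ) × (ℕ → ℕ) | LinearOn (bracketVectors n) p.1 p.2}.Finite :=
    ((finite_bracketVectors n).prod (finite_bracketVectors n)).subset fun p hp => ⟨hp.1, hp.2.1⟩
  have hex : ∀ p : (ℕ → ℕ) × (ℕ → ℕ), LinearOn (bracketVectors n) p.1 p.2 →
      ∃ k < n, HeightOn (bracketVectors n) p.1 p.2 k := fun p hp => hp.exists_height hn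
  choose! ht hlt hht using hex
  rw [Set.ncard_eq_toFinset_card _ hfin, Finset.card_eq_sum_card_fiberwise (f := ht)
    (t := Finset.range n)]
  · refine Finset.sum_congr rfl fun k _ => ?_
    rw [← Set.ncard_coe_finset]
    congr 1
    ext p
    simp only [Finset.coe_filter, Set.Finite.mem_toFinset, Set.mem_ofPred_eq, linearPairs]
    exact and_congr_right fun hp => ⟨fun h => h ▸ hht p hp, fun h => (hht p hp).unique h⟩
  · intro p hp
    rw [Finset.mem_coe, Set.Finite.mem_toFinset] at hp
    exact Finset.mem_coe.2 (Finset.mem_range.2 (hlt p hp))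

theorem sum_range_choose_sub (L r M : ℕ) (h : M ≤ L) :
    ∑ i ∈ Finset.range M, (L - 1 - i).choose r + (L - M).choose (r + 1) = L.choose (r + 1) := by
  induction M with
  | zero => simp
  | succ M ih =>
    rw [← ih (by omega), Finset.sum_range_succ, show L - M = L - (M + 1) + 1 by omega,
      Nat.choose_succ_succ, show L - 1 - M = L - (M + 1) by omega, add_assoc]

end Transfer

/-- counts of linear intervals of each height in the Tamari lattice
`Tam_n`, and the total count.  (Note: `binom (2n-1) (n-2)` is written in the symmetric
form `binom (2n-1) (n+1)` to avoid the truncation of natural subtraction at `n = 1`.) -/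
theorem stmt1 (n : ℕ) (hn : 1 ≤ n) :
    {pq : List Bool × List Bool |
        LinearInterval (DyckSet n) (tamLE) pq.1 pq.2 ∧
          IntervalHeight (DyckSet n) (tamLE) pq.1 pq.2 (0)}.ncard = (2 * n).choose n / (n + 1) ∧
    {pq : List Bool × List Bool |
        LinearInterval (DyckSet n) (tamLE) pq.1 pq.2 ∧
          IntervalHeight (DyckSet n) (tamLE) pq.1 pq.2 (1)}.ncard = (2 * n - 1).choose (n + 1) ∧
    (∀ k, 2 ≤ k → k < n →
      {pq : List Bool × List Bool |
        LinearInterval (DyckSet n) (tamLE) pq.1 pq.2 ∧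
          IntervalHeight (DyckSet n) (tamLE) pq.1 pq.2 (k)}.ncard = 2 * (2 * n - k).choose (n - k - 1)) ∧
    (∀ k, n ≤ k → ∀ P Q : List Bool,
      ¬ (LinearInterval (DyckSet n) tamLE P Q ∧
          IntervalHeight (DyckSet n) tamLE P Q k)) ∧
    {pq : List Bool × List Bool |
        LinearInterval (DyckSet n) tamLE pq.1 pq.2}.ncard
      = (2 * n).choose n / (n + 1) + (2 * n - 1).choose (n + 1)
          + 2 * (2 * n - 1).choose (n + 2) := by
  refine ⟨?_, ?_, fun k hk hkn => ?_, fun k hk P Q h => ?_, ?_⟩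
  · rw [ncard_linearInterval_height, ncard_linearPairs_zero]
  · rw [ncard_linearInterval_height, ncard_linearPairs_one]
  · rw [ncard_linearInterval_height, ncard_linearPairs hk]
    congr 1
    exact Nat.choose_symm_of_eq_add (by omega)
  · obtain ⟨hP, hQ, hlin⟩ := linearInterval_iff.1 h.1
    obtain ⟨l, hl, hl'⟩ := hlin.exists_height hn
    have := hl'.unique ((intervalHeight_iff hP hQ).1 h.2)
    omega
  · simp only [linearInterval_iff]
    rw [ncard_words_eq_ncard_vectors (R := fun p => LinearOn (bracketVectors n) p.1 p.2)
      fun p hp => ⟨hp.1, hp.2.1⟩, ncard_linearOn hn]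
    rcases hn.eq_or_lt with rfl | hn2
    · simp [ncard_linearPairs_zero, Nat.choose]
    · obtain ⟨N, rfl⟩ : ∃ N, n = N + 2 := ⟨n - 2, by omega⟩
      have hs := sum_range_choose_sub (2 * (N + 2) - 1) (N + 2 + 1) N (by omega)
      rw [Nat.choose_eq_zero_of_lt (by omega : 2 * (N + 2) - 1 - N < N + 2 + 1 + 1), add_zero] at hs
      rw [Finset.sum_range_succ', Finset.sum_range_succ', ncard_linearPairs_zero,
        ncard_linearPairs_one, Finset.sum_congr rfl fun i _ => ncard_linearPairs (by omega),
        ← Finset.mul_sum, ← hs, Finset.sum_congr rfl fun i _ => by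
          rw [show 2 * (N + 2) - (i + 1 + 1) = 2 * (N + 2) - 1 - 1 - i by omega]]
      omega
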